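/- arXiv:2512.14326 — 2 statements merged into one kernel-verified Lean document; each statement's English description precedes it below -/
import Mathlib

section
/- Let K be a relatively congruence distributive quasivariety whose class K_rfsi of relatively finitely subdirectly irreducible members is closed under nontrivial subalgebras. Then every congruence preserving Beth companion M of K is an arithmetical variety with the congruence extension property such that the class M_fsi of finitely subdirectly irreducible members of M is closed under nontrivial subalgebras. -/
namespace Impl

open FirstOrder Language

universe u v

/-- A bundled algebra (first-order structure) for the language `L`. -/
structure Alg (L : FirstOrder.Language.{u, u}) : Type (u + 1) where
  carrier : Type u
  [str : L.Structure carrier]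

attribute [instance] Alg.str

variable {L : FirstOrder.Language.{u, u}}

/-- The direct product of a family of algebras. -/
def Alg.pi {ι : Type u} (A : ι → Alg L) : Alg L where
  carrier := ∀ i, (A i).carrier
  str :=
    { funMap := fun {k} f v i => Structure.funMap f fun j => v j i
      RelMap := fun {k} r v => ∀ i, Structure.RelMap r fun j => v j i }

/-- The binary direct product of two algebras. -/
def Alg.prod (A B : Alg L) : Alg L where
  carrier := A.carrier × B.carrier
  str :=
    { funMap := fun {k} f v =>
        (Structure.funMap f fun j => (v j).1, Structure.funMap f fun j => (v j).2)
      RelMap := fun {k} r v =>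
        Structure.RelMap r (fun j => (v j).1) ∧ Structure.RelMap r fun j => (v j).2 }

/-- The ultraproduct of a family of algebras with respect to an ultrafilter. -/
def Alg.uprod {ι : Type u} (F : Ultrafilter ι) (A : ι → Alg L) : Alg L where
  carrier := Filter.Product (F : Filter ι) fun i => (A i).carrier
  str := inferInstance

/-- Closure under isomorphic copies. -/
def ClosedUnderIso (K : Set (Alg L)) : Prop :=
  ∀ A B : Alg L, A ∈ K → Nonempty (A.carrier ≃[L] B.carrier) → B ∈ K

/-- Closure under subalgebras (up to the identification of a subalgebra with an embedding). -/
def ClosedUnderSub (K : Set (Alg L)) : Prop :=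
  ∀ A B : Alg L, B ∈ K → Nonempty (A.carrier ↪[L] B.carrier) → A ∈ K

/-- Closure under direct products. -/
def ClosedUnderProd (K : Set (Alg L)) : Prop :=
  ∀ (ι : Type u) (A : ι → Alg L), (∀ i, A i ∈ K) → Alg.pi A ∈ K

/-- Closure under finite direct products. -/
def ClosedUnderFinProd (K : Set (Alg L)) : Prop :=
  ∀ (ι : Type u), Finite ι → ∀ A : ι → Alg L, (∀ i, A i ∈ K) → Alg.pi A ∈ K

/-- Closure under homomorphic images. -/
def ClosedUnderHomImg (K : Set (Alg L)) : Prop :=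
  ∀ A B : Alg L, A ∈ K → ∀ h : A.carrier →[L] B.carrier, Function.Surjective h → B ∈ K

/-- Closure under ultraproducts. -/
def ClosedUnderUprod (K : Set (Alg L)) : Prop :=
  ∀ (ι : Type u) (F : Ultrafilter ι) (A : ι → Alg L), (∀ i, A i ∈ K) → Alg.uprod F A ∈ K

/-- A universal class: a class closed under isomorphic copies, subalgebras and ultraproducts. -/
def IsUniversalClass (K : Set (Alg L)) : Prop :=
  ClosedUnderIso K ∧ ClosedUnderSub K ∧ ClosedUnderUprod K

/-- A quasivariety: a class closed under isomorphic copies, subalgebras, direct products and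
ultraproducts. -/
def IsQuasivariety (K : Set (Alg L)) : Prop :=
  ClosedUnderIso K ∧ ClosedUnderSub K ∧ ClosedUnderProd K ∧ ClosedUnderUprod K

/-- A variety: a class closed under homomorphic images, subalgebras and direct products. -/
def IsVariety (K : Set (Alg L)) : Prop :=
  ClosedUnderHomImg K ∧ ClosedUnderSub K ∧ ClosedUnderProd K

/-- The least quasivariety containing `K`. -/
def QGen (K : Set (Alg L)) : Set (Alg L) :=
  ⋂₀ { M : Set (Alg L) | IsQuasivariety M ∧ K ⊆ M }

/-- The least variety containing `K`. -/
def VGen (K : Set (Alg L)) : Set (Alg L) :=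
  ⋂₀ { M : Set (Alg L) | IsVariety M ∧ K ⊆ M }

/-- An elementary class: the class of all models of some first-order theory. -/
def IsElementary (K : Set (Alg L)) : Prop :=
  ∃ T : L.Theory, ∀ A : Alg L, A ∈ K ↔ ∀ φ ∈ T, A.carrier ⊨ φ

/-- Finite conjunctions of equations (with `⊤` as the empty conjunction). -/
inductive IsConjEq {α : Type v} : ∀ {k : ℕ}, L.BoundedFormula α k → Prop
  | top {k} : IsConjEq (⊤ : L.BoundedFormula α k)
  | equal {k} (t₁ t₂ : L.Term (α ⊕ Fin k)) : IsConjEq (BoundedFormula.equal t₁ t₂)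
  | inf {k} {φ ψ : L.BoundedFormula α k} : IsConjEq φ → IsConjEq ψ → IsConjEq (φ ⊓ ψ)

/-- Positive quantifier-free formulas: built from equations, `⊤` and `⊥` using `⊓` and `⊔`. -/
inductive IsPosQF {α : Type v} : ∀ {k : ℕ}, L.BoundedFormula α k → Prop
  | falsum {k} : IsPosQF (⊥ : L.BoundedFormula α k)
  | top {k} : IsPosQF (⊤ : L.BoundedFormula α k)
  | equal {k} (t₁ t₂ : L.Term (α ⊕ Fin k)) : IsPosQF (BoundedFormula.equal t₁ t₂)
  | inf {k} {φ ψ : L.BoundedFormula α k} : IsPosQF φ → IsPosQF ψ → IsPosQF (φ ⊓ ψ)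
  | sup {k} {φ ψ : L.BoundedFormula α k} : IsPosQF φ → IsPosQF ψ → IsPosQF (φ ⊔ ψ)

/-- Primitive positive (pp) formulas: existentially quantified finite conjunctions of
equations. -/
inductive IsPP {α : Type v} : ∀ {k : ℕ}, L.BoundedFormula α k → Prop
  | of_conjEq {k} {φ : L.BoundedFormula α k} : IsConjEq φ → IsPP φ
  | ex {k} {φ : L.BoundedFormula α (k + 1)} : IsPP φ → IsPP φ.ex

/-- Existential positive formulas: existentially quantified positive quantifier-free
formulas. -/
inductive IsExistPos {α : Type v} : ∀ {k : ℕ}, L.BoundedFormula α k → Prop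
  | of_posQF {k} {φ : L.BoundedFormula α k} : IsPosQF φ → IsExistPos φ
  | ex {k} {φ : L.BoundedFormula α (k + 1)} : IsExistPos φ → IsExistPos φ.ex

/-- Two formulas are equivalent in a class of algebras. -/
def EquivOn (K : Set (Alg L)) {α : Type v} (φ ψ : L.Formula α) : Prop :=
  ∀ A : Alg L, A ∈ K → ∀ x : α → A.carrier, φ.Realize x ↔ ψ.Realize x

/-- A formula is preserved by homomorphisms in `K`. -/
def PreservedByHomsOn (K : Set (Alg L)) {α : Type v} (φ : L.Formula α) : Prop :=
  ∀ A B : Alg L, A ∈ K → B ∈ K → ∀ (h : A.carrier →[L] B.carrier) (x : α → A.carrier),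
    φ.Realize x → φ.Realize fun a => h (x a)

/-- A formula is preserved by direct products in `K`. -/
def PreservedByProdsOn (K : Set (Alg L)) {α : Type v} (φ : L.Formula α) : Prop :=
  ∀ (ι : Type u) (A : ι → Alg L), (∀ i, A i ∈ K) → ∀ x : α → (Alg.pi A).carrier,
    (∀ i, φ.Realize fun a => x a i) → φ.Realize x

/-- An `n`-ary partial function on a class of algebras `K`: a family assigning to each member of
`K` an `n`-ary partial function on its carrier. -/
def PartialFunOn (K : Set (Alg L)) (n : ℕ) :=
  ∀ (A : Alg L), A ∈ K → ((Fin n → A.carrier) →. A.carrier)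

/-- A partial function on `K` is defined by the formula `φ(x₁, …, xₙ, y)` (the last variable
being the output) when its graph on each member of `K` is the solution set of `φ`. -/
def DefinedBy {K : Set (Alg L)} {n : ℕ} (f : PartialFunOn K n)
    (φ : L.Formula (Fin (n + 1))) : Prop :=
  ∀ (A : Alg L) (hA : A ∈ K) (x : Fin n → A.carrier) (b : A.carrier),
    b ∈ f A hA x ↔ φ.Realize (Fin.snoc x b)

/-- The formula `φ(x₁, …, xₙ, y)` is functional in `K`: for all inputs there is at most one
output satisfying it. -/
def FunctionalIn (K : Set (Alg L)) {n : ℕ} (φ : L.Formula (Fin (n + 1))) : Prop :=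
  ∀ A : Alg L, A ∈ K → ∀ (x : Fin n → A.carrier) (b₁ b₂ : A.carrier),
    φ.Realize (Fin.snoc x b₁) → φ.Realize (Fin.snoc x b₂) → b₁ = b₂

/-- A partial function on `K` is an operation of `K` when it is preserved by all homomorphisms
between members of `K`. -/
def IsOperationOn {K : Set (Alg L)} {n : ℕ} (f : PartialFunOn K n) : Prop :=
  ∀ (A B : Alg L) (hA : A ∈ K) (hB : B ∈ K) (h : A.carrier →[L] B.carrier)
    (x : Fin n → A.carrier) (b : A.carrier),
    b ∈ f A hA x → h b ∈ f B hB fun i => h (x i)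

/-- A partial function on `K` is implicit when it is defined by some formula. -/
def IsImplicit {K : Set (Alg L)} {n : ℕ} (f : PartialFunOn K n) : Prop :=
  ∃ φ : L.Formula (Fin (n + 1)), DefinedBy f φ

/-- An implicit operation of `K`: a partial function that is both implicit and an operation. -/
def IsImplicitOp {K : Set (Alg L)} {n : ℕ} (f : PartialFunOn K n) : Prop :=
  IsImplicit f ∧ IsOperationOn f

/-- An implicit operation is extendable when every tuple in every member of `K` lies in the
domain of the operation in some extension inside `K`. -/
def Extendable {K : Set (Alg L)} {n : ℕ} (f : PartialFunOn K n) : Prop :=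
  ∀ (A : Alg L) (hA : A ∈ K) (x : Fin n → A.carrier),
    ∃ (B : Alg L) (hB : B ∈ K) (e : A.carrier ↪[L] B.carrier),
      (f B hB fun i => e (x i)).Dom

/-- The dominion of a subset `s` of `M` relative to the class `K`. -/
def dominion (K : Set (Alg L)) (M : Type u) [L.Structure M] (s : Set M) : Set M :=
  { b | ∀ C : Alg L, C ∈ K → ∀ g h : M →[L] C.carrier, (∀ a ∈ s, g a = h a) → g b = h b }

/-- The strong epimorphism surjectivity property. -/
def StrongES (K : Set (Alg L)) : Prop :=
  ∀ (A B : Alg L), A ∈ K → B ∈ K → ∀ (f : A.carrier →[L] B.carrier) (b : B.carrier),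
    b ∉ Set.range f →
      ∃ C : Alg L, C ∈ K ∧ ∃ g h : B.carrier →[L] C.carrier,
        (∀ a : A.carrier, g (f a) = h (f a)) ∧ g b ≠ h b

/-- The weak epimorphism surjectivity property: every `K`-epimorphism between finitely
generated members of `K` is surjective. -/
def WeakES (K : Set (Alg L)) : Prop :=
  ∀ (A B : Alg L), A ∈ K → B ∈ K →
    Structure.FG L A.carrier → Structure.FG L B.carrier →
      ∀ f : A.carrier →[L] B.carrier,
        (∀ C : Alg L, C ∈ K → ∀ g h : B.carrier →[L] C.carrier,
          (∀ a : A.carrier, g (f a) = h (f a)) → g = h) →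
        Function.Surjective f

/-- The amalgamation property. -/
def HasAmalgamation (K : Set (Alg L)) : Prop :=
  ∀ (A B C : Alg L), A ∈ K → B ∈ K → C ∈ K →
    ∀ (f : A.carrier ↪[L] B.carrier) (g : A.carrier ↪[L] C.carrier),
      ∃ D : Alg L, D ∈ K ∧ ∃ (f' : B.carrier ↪[L] D.carrier) (g' : C.carrier ↪[L] D.carrier),
        ∀ a : A.carrier, f' (f a) = g' (g a)

/-- A finitely presented member of `K`: an algebra in `K` with a finite presentation, phrased
through the usual universal property of `T(X)/Cg_K(Y)`. -/
def FinitelyPresentedIn (K : Set (Alg L)) (B : Alg L) : Prop :=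
  B ∈ K ∧ ∃ (m : ℕ) (Y : Finset (L.Term (Fin m) × L.Term (Fin m))) (b : Fin m → B.carrier),
    Substructure.closure L (Set.range b) = ⊤ ∧
    (∀ p ∈ Y, p.1.realize b = p.2.realize b) ∧
    ∀ C : Alg L, C ∈ K → ∀ x : Fin m → C.carrier,
      (∀ p ∈ Y, p.1.realize x = p.2.realize x) →
        ∃ g : B.carrier →[L] C.carrier, ∀ i, g (b i) = x i

/-- Subdirectly irreducible relative to `K`. -/
def IsRSI (K : Set (Alg L)) (A : Alg L) : Prop :=
  A ∈ K ∧ ∀ (ι : Type u) (B : ι → Alg L), (∀ i, B i ∈ K) →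
    ∀ h : A.carrier ↪[L] (Alg.pi B).carrier,
      (∀ i, Function.Surjective fun a => h a i) →
        ∃ i, Function.Bijective fun a => h a i

/-- Finitely subdirectly irreducible relative to `K`. -/
def IsRFSI (K : Set (Alg L)) (A : Alg L) : Prop :=
  A ∈ K ∧ ∀ (ι : Type u), Finite ι → ∀ B : ι → Alg L, (∀ i, B i ∈ K) →
    ∀ h : A.carrier ↪[L] (Alg.pi B).carrier,
      (∀ i, Function.Surjective fun a => h a i) →
        ∃ i, Function.Bijective fun a => h a i

/-- A congruence on an algebra: an equivalence relation compatible with all the operations. -/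
def IsCongruenceOn (A : Alg L) (θ : A.carrier → A.carrier → Prop) : Prop :=
  Equivalence θ ∧
    ∀ (k : ℕ) (f : L.Functions k) (x y : Fin k → A.carrier),
      (∀ i, θ (x i) (y i)) → θ (Structure.funMap f x) (Structure.funMap f y)

/-- The quotient of an algebra by (the setoid of) an equivalence relation; when the relation is
a congruence this is the quotient algebra. -/
noncomputable def Alg.quot (A : Alg L) (θ : A.carrier → A.carrier → Prop) (h : Equivalence θ) :
    Alg L where
  carrier := Quotient (⟨θ, h⟩ : Setoid A.carrier)
  str :=
    { funMap := fun {k} f v => Quotient.mk _ (Structure.funMap f fun i => (v i).out)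
      RelMap := fun {k} r v => Structure.RelMap r fun i => (v i).out }

/-- A `K`-congruence of `A`: a congruence whose quotient lies in `K`. -/
def IsRelCong (K : Set (Alg L)) (A : Alg L) (θ : A.carrier → A.carrier → Prop) : Prop :=
  ∃ h : IsCongruenceOn A θ, Alg.quot A θ h.1 ∈ K

/-- The join of two relations in the lattice of `K`-congruences of `A`. -/
def relCongJoin (K : Set (Alg L)) (A : Alg L)
    (θ φ : A.carrier → A.carrier → Prop) (x y : A.carrier) : Prop :=
  ∀ ρ : A.carrier → A.carrier → Prop, IsRelCong K A ρ →
    (∀ a b, θ a b → ρ a b) → (∀ a b, φ a b → ρ a b) → ρ x y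

/-- Relative congruence distributivity: the lattice of `K`-congruences of each member of `K`
is distributive. -/
def RelCongDistributive (K : Set (Alg L)) : Prop :=
  ∀ A : Alg L, A ∈ K → ∀ θ φ ψ : A.carrier → A.carrier → Prop,
    IsRelCong K A θ → IsRelCong K A φ → IsRelCong K A ψ →
      ∀ x y : A.carrier,
        (θ x y ∧ relCongJoin K A φ ψ x y) ↔
          relCongJoin K A (fun a b => θ a b ∧ φ a b) (fun a b => θ a b ∧ ψ a b) x y

/-- The join of two relations in the lattice of congruences of `A`. -/
def congJoin (A : Alg L) (θ φ : A.carrier → A.carrier → Prop) (x y : A.carrier) : Prop :=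
  ∀ ρ : A.carrier → A.carrier → Prop, IsCongruenceOn A ρ →
    (∀ a b, θ a b → ρ a b) → (∀ a b, φ a b → ρ a b) → ρ x y

/-- Congruence permutability for all members of a class. -/
def CongPermutableClass (K : Set (Alg L)) : Prop :=
  ∀ A : Alg L, A ∈ K → ∀ θ φ : A.carrier → A.carrier → Prop,
    IsCongruenceOn A θ → IsCongruenceOn A φ →
      ∀ x y : A.carrier, (∃ z, θ x z ∧ φ z y) ↔ ∃ z, φ x z ∧ θ z y

/-- Congruence distributivity for all members of a class. -/
def CongDistributiveClass (K : Set (Alg L)) : Prop :=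
  ∀ A : Alg L, A ∈ K → ∀ θ φ ψ : A.carrier → A.carrier → Prop,
    IsCongruenceOn A θ → IsCongruenceOn A φ → IsCongruenceOn A ψ →
      ∀ x y : A.carrier,
        (θ x y ∧ congJoin A φ ψ x y) ↔
          congJoin A (fun a b => θ a b ∧ φ a b) (fun a b => θ a b ∧ ψ a b) x y

/-- The congruence extension property. -/
def HasCEP (K : Set (Alg L)) : Prop :=
  ∀ A B : Alg L, A ∈ K → B ∈ K → ∀ e : A.carrier ↪[L] B.carrier,
    ∀ θ : A.carrier → A.carrier → Prop, IsCongruenceOn A θ →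
      ∃ ρ : B.carrier → B.carrier → Prop, IsCongruenceOn B ρ ∧
        ∀ x y : A.carrier, θ x y ↔ ρ (e x) (e y)

/-- The language consisting of one new function symbol `gᵢ` of arity `ar i` for each `i`. -/
def newLang {ι : Type u} (ar : ι → ℕ) : FirstOrder.Language.{u, u} where
  Functions := fun n => { i : ι // ar i = n }
  Relations := fun _ => PEmpty

/-- The `L`-reduct of an algebra in an expanded language `L.sum N`. -/
def algReduct {N : FirstOrder.Language.{u, u}} (B : Alg (L.sum N)) : Alg L where
  carrier := B.carrier
  str := (LHom.sumInl : L →ᴸ L.sum N).reduct B.carrier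

/-- The class `K[L_F]` of expansions of members of `K` on which each operation in the family
`f` is total, interpreting the new symbol `gᵢ` as `f i`. -/
def expClass (K : Set (Alg L)) {ι : Type u} (ar : ι → ℕ)
    (f : ∀ i, PartialFunOn K (ar i)) : Set (Alg (L.sum (newLang ar))) :=
  { B | ∃ hB : algReduct B ∈ K,
      ∀ (i : ι) (x : Fin (ar i) → B.carrier),
        Structure.funMap (L := L.sum (newLang ar)) (M := B.carrier)
            (Sum.inr ⟨i, rfl⟩ : (L.sum (newLang ar)).Functions (ar i)) x
          ∈ f i (algReduct B) hB x }

/-- Closure under subalgebras (and isomorphic copies) inside a fixed language. -/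
def SClosure {L' : FirstOrder.Language.{u, u}} (S : Set (Alg L')) : Set (Alg L') :=
  { A | ∃ B ∈ S, Nonempty (A.carrier ↪[L'] B.carrier) }

/-- Membership in `ext_pp(K)`: an extendable implicit operation defined by a pp formula. -/
def InExtPP {K : Set (Alg L)} {n : ℕ} (f : PartialFunOn K n) : Prop :=
  IsOperationOn f ∧ (∃ φ : L.Formula (Fin (n + 1)), IsPP φ ∧ DefinedBy f φ) ∧ Extendable f

/-- `M` is the pp expansion of `K` induced by the family `f` of extendable pp-definable
implicit operations, with one new symbol of arity `ar i` for each `i`. -/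
def IsPPExpansionVia (K : Set (Alg L)) {ι : Type u} (ar : ι → ℕ)
    (f : ∀ i, PartialFunOn K (ar i)) (M : Set (Alg (L.sum (newLang ar)))) : Prop :=
  (∀ i, 0 < ar i) ∧ (∀ i, InExtPP (f i)) ∧ M = SClosure (expClass K ar f)

/-- Every implicit operation of `K` is interpolated in `M` by a set of terms of the expanded
language. -/
def InterpolatesByTermsInExp (K : Set (Alg L)) {ι : Type u} {ar : ι → ℕ}
    (M : Set (Alg (L.sum (newLang ar)))) : Prop :=
  ∀ n : ℕ, 0 < n → ∀ g : PartialFunOn K n, IsImplicitOp g →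
    ∃ T : Set ((L.sum (newLang ar)).Term (Fin n)),
      ∀ A : Alg (L.sum (newLang ar)), A ∈ M →
        ∀ (hA : algReduct A ∈ K) (x : Fin n → A.carrier) (b : A.carrier),
          b ∈ g (algReduct A) hA x → ∃ t ∈ T, t.realize x = b

/-- `M` is a Beth companion of `K` (via the given expansion datum). -/
def IsBethCompanionVia (K : Set (Alg L)) {ι : Type u} (ar : ι → ℕ)
    (f : ∀ i, PartialFunOn K (ar i)) (M : Set (Alg (L.sum (newLang ar)))) : Prop :=
  IsPPExpansionVia K ar f M ∧ InterpolatesByTermsInExp K M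

/-- A pp expansion is congruence preserving when the `M`-congruences of each member of `M`
coincide with the `K`-congruences of its `L`-reduct. -/
def CongPreserving {N : FirstOrder.Language.{u, u}} (K : Set (Alg L))
    (M : Set (Alg (L.sum N))) : Prop :=
  ∀ A : Alg (L.sum N), A ∈ M → ∀ θ : A.carrier → A.carrier → Prop,
    IsRelCong M A θ ↔ IsRelCong K (algReduct A) θ

/-- Reinterpretation of an `L₁`-algebra as an `L₂`-algebra along a map sending `L₂`-symbols to
`L₁`-terms (both languages are assumed to be purely functional). -/
def reinterpret {L₁ L₂ : FirstOrder.Language.{u, u}} (ρ : ∀ n, L₂.Functions n → L₁.Term (Fin n))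
    (A : Alg L₁) : Alg L₂ where
  carrier := A.carrier
  str :=
    { funMap := fun {k} s x => (ρ k s).realize x
      RelMap := fun {k} _ _ => False }

/-- Two expansions of the same base language `L` are faithfully term equivalent relative to
`L`. -/
def FaithfullyTermEquivRel (L : FirstOrder.Language.{u, u}) {N₁ N₂ : FirstOrder.Language.{u, u}}
    (M₁ : Set (Alg (L.sum N₁))) (M₂ : Set (Alg (L.sum N₂))) : Prop :=
  ∃ (τ : ∀ n, (L.sum N₁).Functions n → (L.sum N₂).Term (Fin n))
    (ρ : ∀ n, (L.sum N₂).Functions n → (L.sum N₁).Term (Fin n)),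
    (∀ (n : ℕ) (s : L.Functions n),
      τ n (Sum.inl s) = Term.func (Sum.inl s : (L.sum N₂).Functions n) Term.var) ∧
    (∀ (n : ℕ) (s : L.Functions n),
      ρ n (Sum.inl s) = Term.func (Sum.inl s : (L.sum N₁).Functions n) Term.var) ∧
    (∀ A : Alg (L.sum N₁), A ∈ M₁ → reinterpret ρ A ∈ M₂) ∧
    (∀ B : Alg (L.sum N₂), B ∈ M₂ → reinterpret τ B ∈ M₁) ∧
    (∀ A : Alg (L.sum N₁), A ∈ M₁ → reinterpret τ (reinterpret ρ A) = A) ∧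
    (∀ B : Alg (L.sum N₂), B ∈ M₂ → reinterpret ρ (reinterpret τ B) = B)

/-!
Let `R` be a subalgebra of `B × B`, for `B ∈ M`, which is reflexive on its field. A homomorphism
from `B × B` into a relatively finitely subdirectly irreducible algebra factors through one of the
two projections, because its kernel is meet-prime in a distributive lattice of `K`-congruences.
Comparing the projections used by two homomorphisms that agree on `R` shows that every pair of
elements of the field of `R` lying in the `K`-congruence generated by `R` belongs to the dominion
of `R`. By compactness, an element of a dominion is the value of an implicit operation of `K`, and
in `M` implicit operations are interpolated by terms, so such a pair already belongs to `R`.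

Hence reflexive compatible relations on members of `M` are `M`-congruences, even after passing to
a larger algebra. Applied to congruences, to composites of two congruences and to congruences of
subalgebras, this yields that `M` is a variety, is congruence permutable and has the congruence
extension property. Distributivity and the last claim are inherited from `K`.
-/

section Homomorphisms

variable {A B C : Alg L}

/-- The kernel of a homomorphism. -/
def homKer (g : A.carrier →[L] B.carrier) : A.carrier → A.carrier → Prop :=
  fun a b => g a = g b

/-- Compatibility of a relation with the basic operations, that is, being a subuniverse of the
square of the algebra; a congruence is a compatible equivalence relation. -/
def IsCompatible (A : Alg L) (S : A.carrier → A.carrier → Prop) : Prop :=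
  ∀ (k : ℕ) (f : L.Functions k) (x y : Fin k → A.carrier),
    (∀ i, S (x i) (y i)) → S (Structure.funMap f x) (Structure.funMap f y)

theorem isCongruenceOn_homKer (g : A.carrier →[L] B.carrier) : IsCongruenceOn A (homKer g) := by
  refine ⟨⟨fun _ => rfl, Eq.symm, Eq.trans⟩, fun k f x y h => ?_⟩
  simp only [homKer, Hom.map_fun]
  exact congrArg _ (funext h)

/-- The `i`-th projection of a direct product. -/
def piProj {ι : Type u} (A : ι → Alg L) (i : ι) : (Alg.pi A).carrier →[L] (A i).carrier where
  toFun x := x i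
  map_rel' _ _ h := h i

/-- The first projection of a binary product. -/
def prodFst (A B : Alg L) : (A.prod B).carrier →[L] A.carrier where
  toFun := Prod.fst
  map_rel' _ _ h := h.1

/-- The second projection of a binary product. -/
def prodSnd (A B : Alg L) : (A.prod B).carrier →[L] B.carrier where
  toFun := Prod.snd
  map_rel' _ _ h := h.2

/-- The diagonal embedding of an algebra into its square, as a homomorphism. -/
def prodDiag (A : Alg L) : A.carrier →[L] (A.prod A).carrier where
  toFun a := (a, a)
  map_rel' _ _ h := ⟨h, h⟩

variable [L.IsAlgebraic]

/-- In an algebraic language, a map preserving the basic operations is a homomorphism. -/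
def homOfMapFun (g : A.carrier → B.carrier)
    (hg : ∀ {k : ℕ} (f : L.Functions k) (x : Fin k → A.carrier),
      g (Structure.funMap f x) = Structure.funMap f (g ∘ x)) : A.carrier →[L] B.carrier where
  toFun := g
  map_fun' := hg
  map_rel' r := isEmptyElim r

/-- The canonical homomorphism onto a quotient by a congruence. -/
noncomputable def quotMk {θ : A.carrier → A.carrier → Prop} (hθ : IsCongruenceOn A θ) :
    A.carrier →[L] (A.quot θ hθ.1).carrier :=
  homOfMapFun (Quotient.mk ⟨θ, hθ.1⟩) fun {k} f _ =>
    Quotient.sound (hθ.2 k f _ _ fun _ => hθ.1.symm (Quotient.mk_out (s := ⟨θ, hθ.1⟩) _))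

theorem quotMk_eq_quotMk {θ : A.carrier → A.carrier → Prop} (hθ : IsCongruenceOn A θ)
    {a b : A.carrier} : quotMk hθ a = quotMk hθ b ↔ θ a b :=
  Quotient.eq (r := ⟨θ, hθ.1⟩)

theorem quotMk_surjective {θ : A.carrier → A.carrier → Prop} (hθ : IsCongruenceOn A θ) :
    Function.Surjective (quotMk hθ) :=
  Quotient.exists_rep

theorem exists_hom_comp_eq {q : A.carrier →[L] B.carrier} (hq : Function.Surjective q)
    {g : A.carrier →[L] C.carrier} (hqg : homKer q ≤ homKer g) :
    ∃ k : B.carrier →[L] C.carrier, ∀ a, k (q a) = g a := by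
  choose s hs using hq
  refine ⟨homOfMapFun (g ∘ s) fun f x => ?_, fun a => hqg _ _ (hs (q a))⟩
  have hsx : q ∘ s ∘ x = x := funext fun i => hs (x i)
  have : g (s (Structure.funMap f x)) = g (Structure.funMap f (s ∘ x)) :=
    hqg _ _ (by rw [homKer, hs, Hom.map_fun, hsx])
  rw [Function.comp_apply, this, Hom.map_fun, Function.comp_assoc]

theorem nonempty_embedding_of_homKer_eq {q : A.carrier →[L] B.carrier}
    (hq : Function.Surjective q) {g : A.carrier →[L] C.carrier} (hqg : homKer q = homKer g) :
    Nonempty (B.carrier ↪[L] C.carrier) := by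
  obtain ⟨k, hk⟩ := exists_hom_comp_eq hq hqg.le
  have hinj : Function.Injective k := by
    intro b b' hbb'
    obtain ⟨a, rfl⟩ := hq b
    obtain ⟨a', rfl⟩ := hq b'
    rw [hk, hk] at hbb'
    exact hqg.ge _ _ hbb'
  exact ⟨Embedding.ofInjective hinj⟩

theorem homKer_quotMk {θ : A.carrier → A.carrier → Prop} (hθ : IsCongruenceOn A θ) :
    homKer (quotMk hθ) = θ :=
  funext₂ fun _ _ => propext (quotMk_eq_quotMk hθ)

theorem ClosedUnderProd.prod_mem {K : Set (Alg L)} (hP : ClosedUnderProd K)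
    (hS : ClosedUnderSub K) (hA : A ∈ K) (hB : B ∈ K) : A.prod B ∈ K := by
  let F : ULift.{u} Bool → Alg L := fun i => cond i.down A B
  let toPi : (A.prod B).carrier → (Alg.pi F).carrier :=
    fun p => ULift.rec (Bool.rec p.2 p.1)
  have toPi_funMap {k : ℕ} (f : L.Functions k) (x : Fin k → (A.prod B).carrier) :
      toPi (Structure.funMap f x) = Structure.funMap f (toPi ∘ x) := by
    funext ⟨i⟩
    cases i <;> rfl
  have toPi_injective : Function.Injective (homOfMapFun toPi toPi_funMap) := fun p q h =>
    Prod.ext (congrFun h ⟨true⟩) (congrFun h ⟨false⟩)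
  refine hS _ _ (hP _ F ?_) ⟨Embedding.ofInjective toPi_injective⟩
  rintro ⟨_ | _⟩
  exacts [hB, hA]

end Homomorphisms

section RelativeCongruences

variable {K : Set (Alg L)} {A B : Alg L}

/-- The `K`-congruence of `A` generated by a relation. -/
def relCongGen (K : Set (Alg L)) (A : Alg L) (R : A.carrier → A.carrier → Prop) :
    A.carrier → A.carrier → Prop :=
  fun a b => ∀ ρ, IsRelCong K A ρ → R ≤ ρ → ρ a b

theorem le_relCongGen (R : A.carrier → A.carrier → Prop) : R ≤ relCongGen K A R :=
  fun a b hab _ _ hR => hR a b hab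

theorem left_le_relCongJoin (θ φ : A.carrier → A.carrier → Prop) : θ ≤ relCongJoin K A θ φ :=
  fun a b hab _ _ hθ _ => hθ a b hab

theorem right_le_relCongJoin (θ φ : A.carrier → A.carrier → Prop) : φ ≤ relCongJoin K A θ φ :=
  fun a b hab _ _ _ hφ => hφ a b hab

variable [L.IsAlgebraic]

theorem isRelCong_homKer (hS : ClosedUnderSub K) (hB : B ∈ K) (g : A.carrier →[L] B.carrier) :
    IsRelCong K A (homKer g) :=
  have hg := isCongruenceOn_homKer g
  ⟨hg, hS _ B hB (nonempty_embedding_of_homKer_eq (quotMk_surjective hg) (homKer_quotMk hg))⟩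

theorem IsRelCong.comap (hS : ClosedUnderSub K) {ρ : B.carrier → B.carrier → Prop}
    (hρ : IsRelCong K B ρ) (g : A.carrier →[L] B.carrier) :
    IsRelCong K A (fun a b => ρ (g a) (g b)) := by
  obtain ⟨hρ, hquot⟩ := hρ
  have : homKer ((quotMk hρ).comp g) = fun a b => ρ (g a) (g b) :=
    funext₂ fun _ _ => propext (quotMk_eq_quotMk hρ)
  exact this ▸ isRelCong_homKer hS hquot _

theorem IsRelCong.exists_map (hS : ClosedUnderSub K) {θ : A.carrier → A.carrier → Prop}
    (hθ : IsRelCong K A θ) {q : A.carrier →[L] B.carrier} (hq : Function.Surjective q)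
    (hqθ : homKer q ≤ θ) :
    ∃ ρ, IsRelCong K B ρ ∧ ∀ a b, ρ (q a) (q b) ↔ θ a b := by
  obtain ⟨hθ, hquot⟩ := hθ
  obtain ⟨k, hk⟩ := exists_hom_comp_eq hq (hqθ.trans (homKer_quotMk hθ).ge)
  refine ⟨homKer k, isRelCong_homKer hS hquot k, fun a b => ?_⟩
  rw [homKer, hk, hk, quotMk_eq_quotMk]

theorem isRelCong_relCongGen (hS : ClosedUnderSub K) (hP : ClosedUnderProd K)
    (R : A.carrier → A.carrier → Prop) : IsRelCong K A (relCongGen K A R) := by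
  let J := {ρ // IsRelCong K A ρ ∧ R ≤ ρ}
  have hJ (ρ : J) : IsCongruenceOn A ρ.1 := ρ.2.1.1
  let toPi : A.carrier →[L] (Alg.pi fun ρ : J => A.quot ρ.1 (hJ ρ).1).carrier :=
    homOfMapFun (fun a ρ => quotMk (hJ ρ) a) fun f x => funext fun ρ => (quotMk (hJ ρ)).map_fun f x
  have homKer_toPi : homKer toPi = relCongGen K A R := by
    ext a b
    refine funext_iff.trans ⟨fun h ρ hρ hR => ?_, fun h ρ => ?_⟩
    · exact (quotMk_eq_quotMk hρ.1).1 (h ⟨ρ, hρ, hR⟩)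
    · exact (quotMk_eq_quotMk (hJ ρ)).2 (h ρ.1 ρ.2.1 ρ.2.2)
  exact homKer_toPi ▸ isRelCong_homKer hS (hP _ _ fun ρ => ρ.2.1.2) toPi

theorem isRelCong_relCongJoin (hS : ClosedUnderSub K) (hP : ClosedUnderProd K)
    (θ φ : A.carrier → A.carrier → Prop) : IsRelCong K A (relCongJoin K A θ φ) := by
  have : relCongGen K A (θ ⊔ φ) = relCongJoin K A θ φ := by
    ext a b
    simp only [relCongGen, relCongJoin, sup_le_iff, and_imp]
    rfl
  exact this ▸ isRelCong_relCongGen hS hP _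

theorem relCongJoin_inf_relCongJoin_le (hRCD : RelCongDistributive K) (hS : ClosedUnderSub K)
    (hP : ClosedUnderProd K) (hA : A ∈ K) {κ θ φ : A.carrier → A.carrier → Prop}
    (hκ : IsRelCong K A κ) (hθ : IsRelCong K A θ) (hφ : IsRelCong K A φ) (h : θ ⊓ φ ≤ κ) :
    relCongJoin K A κ θ ⊓ relCongJoin K A κ φ ≤ κ := by
  rintro a b ⟨hab₁, hab₂⟩
  have hJ := isRelCong_relCongJoin hS hP κ θ
  refine (hRCD A hA _ κ φ hJ hκ hφ a b).1 ⟨hab₁, hab₂⟩ κ hκ (fun _ _ => And.right) ?_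
  rintro c d ⟨hcd₁, hcd₂⟩
  exact (hRCD A hA φ κ θ hφ hκ hθ c d).1 ⟨hcd₂, hcd₁⟩ κ hκ (fun _ _ => And.right)
    fun e e' hee' => h e e' hee'.symm

end RelativeCongruences

section Compactness

variable {K : Set (Alg L)} {X : Type u}

/-- The valuation `v` satisfies all the equations in `E`, an equation being encoded as a pair of
terms. -/
def Satisfies {C : Alg L} (v : X → C.carrier) (E : Set (L.Term X × L.Term X)) : Prop :=
  ∀ e ∈ E, e.1.realize v = e.2.realize v

/-- The positive diagram of an algebra: the equations `f(a₁, …, aₖ) = a` that hold in it, with the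
elements of the algebra as variables. -/
def posDiagram (A : Alg L) : Set (L.Term A.carrier × L.Term A.carrier) :=
  {e | ∃ (k : ℕ) (f : L.Functions k) (a : Fin k → A.carrier),
    e = (Term.func f (Term.var ∘ a), Term.var (Structure.funMap f a))}

theorem Satisfies.map {C D : Alg L} {v : X → C.carrier} {E : Set (L.Term X × L.Term X)}
    (hv : Satisfies v E) (g : C.carrier →[L] D.carrier) : Satisfies (g ∘ v) E := by
  intro e he
  rw [HomClass.realize_term, HomClass.realize_term, hv e he]

theorem satisfies_posDiagram {A C : Alg L} (g : A.carrier →[L] C.carrier) :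
    Satisfies g (posDiagram A) := by
  rintro _ ⟨k, f, a, rfl⟩
  exact (g.map_fun f a).symm

theorem exists_hom_of_satisfies_posDiagram [L.IsAlgebraic] {A C : Alg L}
    {v : A.carrier → C.carrier} (hv : Satisfies v (posDiagram A)) :
    ∃ g : A.carrier →[L] C.carrier, ⇑g = v :=
  ⟨homOfMapFun v fun f a => (hv _ ⟨_, f, a, rfl⟩).symm, rfl⟩

theorem exists_uprod_realize_eq_iff {ι : Type u} (F : Ultrafilter ι) {C : ι → Alg L}
    (v : ∀ i, X → (C i).carrier) :
    ∃ w : X → (Alg.uprod F C).carrier, ∀ s t : L.Term X,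
      s.realize w = t.realize w ↔ ∀ᶠ i in (F : Filter ι), s.realize (v i) = t.realize (v i) := by
  let mk (a : ∀ i, (C i).carrier) : (Alg.uprod F C).carrier :=
    Quotient.mk (Filter.productSetoid (F : Filter ι) fun i => (C i).carrier) a
  have realize_mk (t : L.Term X) :
      t.realize (fun x => mk fun i => v i x) = mk fun i => t.realize (v i) :=
    Ultraproduct.term_realize_cast (fun x i => v i x) t
  refine ⟨fun x => mk fun i => v i x, fun s t => ?_⟩
  rw [realize_mk, realize_mk]
  exact Quotient.eq

theorem exists_finset_of_forall_satisfies (hU : ClosedUnderUprod K)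
    {E : Set (L.Term X × L.Term X)} {s t : L.Term X}
    (h : ∀ C ∈ K, ∀ v : X → C.carrier, Satisfies v E → s.realize v = t.realize v) :
    ∃ E₀ : Finset (L.Term X × L.Term X), ↑E₀ ⊆ E ∧
      ∀ C ∈ K, ∀ v : X → C.carrier, Satisfies v E₀ → s.realize v = t.realize v := by
  classical
  by_contra! hcon
  choose C hC v hv hst using fun J : Finset (L.Term X × L.Term X) =>
    hcon {e ∈ J | e ∈ E} fun e he => (Finset.mem_filter.1 he).2
  let F : Ultrafilter (Finset (L.Term X × L.Term X)) := Ultrafilter.of Filter.atTop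
  obtain ⟨w, realize_w_eq_iff⟩ := exists_uprod_realize_eq_iff F v
  have hw : Satisfies w E := fun e he => (realize_w_eq_iff _ _).2 <| by
    have : ∀ᶠ J in (F : Filter (Finset _)), {e} ≤ J :=
      (Filter.eventually_ge_atTop _).filter_mono (Ultrafilter.of_le _)
    filter_upwards [this] with J heJ
    exact hv J e (Finset.mem_filter.2 ⟨Finset.singleton_subset_iff.1 heJ, he⟩)
  obtain ⟨J, hJ⟩ := ((realize_w_eq_iff s t).1 (h _ (hU _ F C hC) w hw)).exists
  exact hst J hJ

/-- The equations presenting the quotient of `A` by the congruence that `R` generates. -/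
def presentation (A : Alg L) (R : A.carrier → A.carrier → Prop) :
    Set (L.Term A.carrier × L.Term A.carrier) :=
  posDiagram A ∪ {e | ∃ a b, R a b ∧ e = (Term.var a, Term.var b)}

theorem presentation_mono (A : Alg L) : Monotone (presentation A) := fun _ _ hRS =>
  Set.union_subset_union_right _ fun _ ⟨a, b, hab, he⟩ => ⟨a, b, hRS a b hab, he⟩

theorem satisfies_presentation {A C : Alg L} {R : A.carrier → A.carrier → Prop}
    {g : A.carrier →[L] C.carrier} (hg : R ≤ homKer g) : Satisfies g (presentation A R) := by
  rintro e (he | ⟨a, b, hab, rfl⟩)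
  · exact satisfies_posDiagram g e he
  · exact hg a b hab

theorem relCongGen_iff_forall_satisfies [L.IsAlgebraic] (hS : ClosedUnderSub K) {A : Alg L}
    {R : A.carrier → A.carrier → Prop} {a b : A.carrier} :
    relCongGen K A R a b ↔
      ∀ C ∈ K, ∀ v : A.carrier → C.carrier, Satisfies v (presentation A R) → v a = v b := by
  refine ⟨fun h C hC v hv => ?_, fun h ρ hρ hR => ?_⟩
  · obtain ⟨g, rfl⟩ := exists_hom_of_satisfies_posDiagram fun e he => hv e (.inl he)
    exact h (homKer g) (isRelCong_homKer hS hC g) fun c d hcd =>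
      hv (Term.var c, Term.var d) (.inr ⟨c, d, hcd, rfl⟩)
  · obtain ⟨hρ, hquot⟩ := hρ
    exact (quotMk_eq_quotMk hρ).1 <| h _ hquot _ <|
      satisfies_presentation (hR.trans (homKer_quotMk hρ).ge)

theorem isRelCong_iUnion_of_isChain [L.IsAlgebraic] (hK : IsQuasivariety K) {A : Alg L}
    {c : Set (A.carrier → A.carrier → Prop)} (hc : IsChain (· ≤ ·) c) (hne : c.Nonempty)
    (hcK : ∀ ρ ∈ c, IsRelCong K A ρ) : IsRelCong K A (fun a b => ∃ ρ ∈ c, ρ a b) := by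
  obtain ⟨-, hS, hP, hU⟩ := hK
  let R : A.carrier → A.carrier → Prop := fun a b => ∃ ρ ∈ c, ρ a b
  suffices hR : R = relCongGen K A R by
    change IsRelCong K A R
    exact hR ▸ isRelCong_relCongGen hS hP R
  refine le_antisymm (le_relCongGen R) fun a b hab => ?_
  obtain ⟨E₀, hE₀, hab⟩ := exists_finset_of_forall_satisfies hU (s := Term.var a)
    (t := Term.var b) ((relCongGen_iff_forall_satisfies hS).1 hab)
  have hE₀c : (E₀ : Set _) ⊆ ⋃ ρ ∈ c, presentation A ρ := by
    refine hE₀.trans (Set.union_subset ?_ ?_)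
    · obtain ⟨ρ, hρ⟩ := hne
      exact Set.subset_union_left.trans (Set.subset_biUnion_of_mem (u := presentation A) hρ)
    · rintro e ⟨a, b, ⟨ρ, hρ, hab⟩, rfl⟩
      exact Set.mem_biUnion hρ (.inr ⟨a, b, hab, rfl⟩)
  obtain ⟨ρ, hρ, hE₀ρ⟩ := DirectedOn.exists_mem_subset_of_finset_subset_biUnion hne
    (hc.directedOn.mono fun _ _ h => presentation_mono A h) hE₀c
  obtain ⟨hρcong, hquot⟩ := hcK ρ hρ
  have hsat : Satisfies (quotMk hρcong) E₀ := fun e he =>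
    satisfies_presentation (homKer_quotMk hρcong).ge e (hE₀ρ he)
  exact ⟨ρ, hρ, (quotMk_eq_quotMk hρcong).1 (hab _ hquot _ hsat)⟩

end Compactness

section FinitelySubdirectlyIrreducible

/-- Closure of a class under subalgebras with at least two elements. -/
def ClosedUnderNontrivialSub (K : Set (Alg L)) : Prop :=
  ∀ A B : Alg L, B ∈ K → Nonempty (A.carrier ↪[L] B.carrier) →
    (∃ x y : A.carrier, x ≠ y) → A ∈ K

variable [L.IsAlgebraic] {K : Set (Alg L)} {A B C : Alg L}

theorem isRFSI_iff (hS : ClosedUnderSub K) :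
    IsRFSI K A ↔ A ∈ K ∧ ∀ ι : Type u, Finite ι → ∀ ρ : ι → A.carrier → A.carrier → Prop,
      (∀ i, IsRelCong K A (ρ i)) → (∀ x y, (∀ i, ρ i x y) → x = y) →
        ∃ i, ∀ x y, ρ i x y → x = y := by
  refine and_congr_right fun _ => ⟨fun h ι hι ρ hρ hinf => ?_, fun h ι hι D hD e he => ?_⟩
  · have hcong (i : ι) : IsCongruenceOn A (ρ i) := (hρ i).1
    let toPi : A.carrier →[L] (Alg.pi fun i => A.quot (ρ i) (hcong i).1).carrier :=
      homOfMapFun (fun a i => quotMk (hcong i) a) fun f x =>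
        funext fun i => (quotMk (hcong i)).map_fun f x
    have toPi_injective : Function.Injective toPi := fun x y hxy =>
      hinf x y fun i => (quotMk_eq_quotMk (hcong i)).1 (congrFun hxy i)
    obtain ⟨i, hi⟩ := h ι hι _ (fun i => (hρ i).2) (Embedding.ofInjective toPi_injective)
      fun i => quotMk_surjective (hcong i)
    exact ⟨i, fun x y hxy => hi.1 ((quotMk_eq_quotMk (hcong i)).2 hxy)⟩
  · obtain ⟨i, hi⟩ := h ι hι (fun i => homKer ((piProj D i).comp e.toHom))
      (fun i => isRelCong_homKer hS (hD i) _) fun x y hxy => e.injective (funext hxy)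
    exact ⟨i, fun x y => hi x y, he i⟩

theorem IsRFSI.eq_bot_or_eq_bot (hS : ClosedUnderSub K) (hA : IsRFSI K A)
    {θ φ : A.carrier → A.carrier → Prop} (hθ : IsRelCong K A θ) (hφ : IsRelCong K A φ)
    (h : θ ⊓ φ ≤ Eq) : θ ≤ Eq ∨ φ ≤ Eq := by
  obtain ⟨⟨_ | _⟩, hi⟩ := ((isRFSI_iff hS).1 hA).2 (ULift Bool) inferInstance
    (fun i => cond i.down θ φ) (by rintro ⟨_ | _⟩ <;> assumption)
    fun x y hxy => h x y ⟨hxy ⟨true⟩, hxy ⟨false⟩⟩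
  exacts [.inr hi, .inl hi]

theorem isRFSI_quot_of_maximal (hS : ClosedUnderSub K) {x y : A.carrier}
    {θ : A.carrier → A.carrier → Prop} (hcong : IsCongruenceOn A θ)
    (hθ : Maximal (fun ρ => IsRelCong K A ρ ∧ ¬ρ x y) θ) : IsRFSI K (A.quot θ hcong.1) := by
  refine (isRFSI_iff hS).2 ⟨hθ.prop.1.2, fun ι _ ρ hρ hinf => ?_⟩
  by_contra! hcon
  have rel_x_y (i : ι) : ρ i (quotMk hcong x) (quotMk hcong y) := by
    by_contra hxy
    have comap_le : (fun a b => ρ i (quotMk hcong a) (quotMk hcong b)) ≤ θ :=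
      hθ.le_of_ge ⟨(hρ i).comap hS _, hxy⟩ fun a b hab =>
        (quotMk_eq_quotMk hcong).2 hab ▸ (hρ i).1.1.refl _
    obtain ⟨c, d, hcd, hne⟩ := hcon i
    obtain ⟨a, rfl⟩ := quotMk_surjective hcong c
    obtain ⟨b, rfl⟩ := quotMk_surjective hcong d
    exact hne ((quotMk_eq_quotMk hcong).2 (comap_le a b hcd))
  exact hθ.prop.2 ((quotMk_eq_quotMk hcong).1 (hinf _ _ rel_x_y))

theorem exists_isRFSI_hom_ne (hK : IsQuasivariety K) (hA : A ∈ K) {x y : A.carrier}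
    (hxy : x ≠ y) : ∃ D, IsRFSI K D ∧ ∃ g : A.carrier →[L] D.carrier, g x ≠ g y := by
  have chain_bound (c) (hc : c ⊆ {ρ | IsRelCong K A ρ ∧ ¬ρ x y}) (hchain : IsChain (· ≤ ·) c)
      (ρ) (hρ : ρ ∈ c) : ∃ σ ∈ {ρ | IsRelCong K A ρ ∧ ¬ρ x y}, ∀ τ ∈ c, τ ≤ σ :=
    ⟨fun a b => ∃ τ ∈ c, τ a b,
      ⟨isRelCong_iUnion_of_isChain hK hchain ⟨ρ, hρ⟩ fun τ hτ => (hc hτ).1,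
        fun ⟨τ, hτ, hτxy⟩ => (hc hτ).2 hτxy⟩,
      fun τ hτ a b hab => ⟨τ, hτ, hab⟩⟩
  have eq_mem : (homKer (Hom.id L A.carrier)) ∈ {ρ | IsRelCong K A ρ ∧ ¬ρ x y} :=
    ⟨isRelCong_homKer hK.2.1 hA _, hxy⟩
  obtain ⟨θ, -, hθ⟩ := zorn_le_nonempty₀ _ chain_bound _ eq_mem
  have hcong : IsCongruenceOn A θ := hθ.prop.1.1
  exact ⟨_, isRFSI_quot_of_maximal hK.2.1 hcong hθ, quotMk hcong, fun h =>
    hθ.prop.2 ((quotMk_eq_quotMk hcong).1 h)⟩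

theorem le_homKer_or_le_homKer_of_inf_le_of_homKer_le (hS : ClosedUnderSub K)
    (hsub : ClosedUnderNontrivialSub {A | IsRFSI K A}) (hC : IsRFSI K C)
    (g : A.carrier →[L] C.carrier) {θ φ : A.carrier → A.carrier → Prop}
    (hθ : IsRelCong K A θ) (hφ : IsRelCong K A φ) (hgθ : homKer g ≤ θ) (hgφ : homKer g ≤ φ)
    (h : θ ⊓ φ ≤ homKer g) : θ ≤ homKer g ∨ φ ≤ homKer g := by
  by_cases hconst : ∀ a b, g a = g b
  · exact .inl fun a b _ => hconst a b
  push Not at hconst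
  obtain ⟨a₀, b₀, hne⟩ := hconst
  have hker := isCongruenceOn_homKer g
  have quot_isRFSI : IsRFSI K (A.quot (homKer g) hker.1) :=
    hsub _ C hC
      (nonempty_embedding_of_homKer_eq (quotMk_surjective hker) (homKer_quotMk hker))
      ⟨quotMk hker a₀, quotMk hker b₀, fun hab => hne ((quotMk_eq_quotMk hker).1 hab)⟩
  obtain ⟨θ', hθ', hθ'θ⟩ := hθ.exists_map hS (quotMk_surjective hker)
    ((homKer_quotMk hker).le.trans hgθ)
  obtain ⟨φ', hφ', hφ'φ⟩ := hφ.exists_map hS (quotMk_surjective hker)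
    ((homKer_quotMk hker).le.trans hgφ)
  have inf_le : θ' ⊓ φ' ≤ Eq := by
    intro c d hcd
    obtain ⟨a, rfl⟩ := quotMk_surjective hker c
    obtain ⟨b, rfl⟩ := quotMk_surjective hker d
    exact (quotMk_eq_quotMk hker).2 (h a b ⟨(hθ'θ a b).1 hcd.1, (hφ'φ a b).1 hcd.2⟩)
  refine (quot_isRFSI.eq_bot_or_eq_bot hS hθ' hφ' inf_le).imp ?_ ?_
  · exact fun hle a b hab => (quotMk_eq_quotMk hker).1 (hle _ _ ((hθ'θ a b).2 hab))
  · exact fun hle a b hab => (quotMk_eq_quotMk hker).1 (hle _ _ ((hφ'φ a b).2 hab))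

theorem le_homKer_or_le_homKer_of_inf_le (hK : IsQuasivariety K) (hRCD : RelCongDistributive K)
    (hsub : ClosedUnderNontrivialSub {A | IsRFSI K A}) (hA : A ∈ K) (hC : IsRFSI K C)
    (g : A.carrier →[L] C.carrier) {θ φ : A.carrier → A.carrier → Prop}
    (hθ : IsRelCong K A θ) (hφ : IsRelCong K A φ) (h : θ ⊓ φ ≤ homKer g) :
    θ ≤ homKer g ∨ φ ≤ homKer g := by
  obtain ⟨-, hS, hP, -⟩ := hK
  have hker := isRelCong_homKer hS hC.1 g
  refine (le_homKer_or_le_homKer_of_inf_le_of_homKer_le hS hsub hC g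
    (isRelCong_relCongJoin hS hP (homKer g) θ) (isRelCong_relCongJoin hS hP (homKer g) φ)
    (left_le_relCongJoin _ _) (left_le_relCongJoin _ _)
    (relCongJoin_inf_relCongJoin_le hRCD hS hP hA hker hθ hφ h)).imp ?_ ?_
  all_goals exact (right_le_relCongJoin _ _).trans

theorem homKer_prodFst_le_or_homKer_prodSnd_le (hK : IsQuasivariety K)
    (hRCD : RelCongDistributive K) (hsub : ClosedUnderNontrivialSub {A | IsRFSI K A})
    (hA : A ∈ K) (hB : B ∈ K) (hC : IsRFSI K C) (g : (A.prod B).carrier →[L] C.carrier) :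
    homKer (prodFst A B) ≤ homKer g ∨ homKer (prodSnd A B) ≤ homKer g :=
  le_homKer_or_le_homKer_of_inf_le hK hRCD hsub (hK.2.2.1.prod_mem hK.2.1 hA hB) hC g
    (isRelCong_homKer hK.2.1 hA _) (isRelCong_homKer hK.2.1 hB _)
    fun _ _ hpq => congrArg g (Prod.ext hpq.1 hpq.2)

variable {R : B.carrier → B.carrier → Prop} {x y : B.carrier}

theorem hom_apply_eq_of_homKer_prodFst_le_of_homKer_prodSnd_le (hS : ClosedUnderSub K)
    (hC : C ∈ K) (hR : ∀ a b, R a b → R b b) (hy : R y y) (hxy : relCongGen K B R x y)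
    {g h : (B.prod B).carrier →[L] C.carrier} (hg : homKer (prodFst B B) ≤ homKer g)
    (hh : homKer (prodSnd B B) ≤ homKer h) (hgh : ∀ a b, R a b → g (a, b) = h (a, b)) :
    g (x, y) = h (x, y) := by
  have g_fst (a b b') : g (a, b) = g (a, b') := hg (a, b) (a, b') rfl
  have h_snd (a a' b) : h (a, b) = h (a', b) := hh (a, b) (a', b) rfl
  have R_le : R ≤ homKer (g.comp (prodDiag B)) := fun a b hab =>
    calc g (a, a) = g (a, b) := g_fst ..
      _ = h (a, b) := hgh a b hab
      _ = h (b, b) := h_snd ..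
      _ = g (b, b) := (hgh b b (hR a b hab)).symm
  calc g (x, y) = g (x, x) := g_fst ..
    _ = g (y, y) := hxy _ (isRelCong_homKer hS hC _) R_le
    _ = h (y, y) := hgh y y hy
    _ = h (x, y) := h_snd ..

theorem mem_dominion_of_relCongGen (hK : IsQuasivariety K) (hRCD : RelCongDistributive K)
    (hsub : ClosedUnderNontrivialSub {A | IsRFSI K A}) (hB : B ∈ K)
    (hR : ∀ a b, R a b → R b b) (hx : R x x) (hy : R y y) (hxy : relCongGen K B R x y) :
    (x, y) ∈ dominion K (B.prod B).carrier {p | R p.1 p.2} := by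
  intro C hC g h hgh
  by_contra hne
  obtain ⟨D, hD, k, hk⟩ := exists_isRFSI_hom_ne hK hC hne
  have factors := homKer_prodFst_le_or_homKer_prodSnd_le hK hRCD hsub hB hB hD
  have agree (a b) (hab : R a b) : k.comp g (a, b) = k.comp h (a, b) :=
    congrArg k (hgh (a, b) hab)
  refine hk ?_
  rcases factors (k.comp g) with hg | hg <;> rcases factors (k.comp h) with hh | hh
  · exact (hg (x, y) (x, x) rfl).trans ((agree x x hx).trans (hh (x, x) (x, y) rfl))
  · exact hom_apply_eq_of_homKer_prodFst_le_of_homKer_prodSnd_le hK.2.1 hD.1 hR hy hxy hg hh agree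
  · exact (hom_apply_eq_of_homKer_prodFst_le_of_homKer_prodSnd_le hK.2.1 hD.1 hR hy hxy hh hg
      fun a b hab => (agree a b hab).symm).symm
  · exact (hg (x, y) (y, y) rfl).trans ((agree y y hy).trans (hh (y, y) (x, y) rfl))

end FinitelySubdirectlyIrreducible

section ImplicitOperations

variable {K : Set (Alg L)}

theorem exists_formula_realize_iff_exists {X : Type u} {α : Type} [Finite α] [Nonempty α]
    (ψ : L.Formula X) (a : α → X) :
    ∃ φ : L.Formula α, ∀ (C : Alg L) (z : α → C.carrier),
      φ.Realize z ↔ ∃ v : X → C.carrier, v ∘ a = z ∧ ψ.Realize v := by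
  classical
  cases nonempty_fintype α
  let V : Finset X := ψ.freeVarFinset ∪ Finset.univ.image a
  have free_mem (x : ψ.freeVarFinset) : x.1 ∈ V := Finset.mem_union_left _ x.2
  have a_mem (i : α) : a i ∈ V :=
    Finset.mem_union_right _ (Finset.mem_image_of_mem a (Finset.mem_univ i))
  let ψV : L.Formula (α ⊕ V) := ψ.restrictFreeVar fun x => Sum.inr ⟨x, free_mem x⟩
  have realize_ψV {C : Alg L} (z : α → C.carrier) (v : X → C.carrier) :
      ψV.Realize (Sum.elim z fun x => v x) ↔ ψ.Realize v :=
    BoundedFormula.realize_restrictFreeVar v fun _ => rfl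
  refine ⟨(ψV ⊓ Formula.iInf fun i => (Term.var (Sum.inr ⟨a i, a_mem i⟩)).equal
    (Term.var (Sum.inl i))).iExs V, fun C z => ?_⟩
  simp only [Formula.realize_iExs, Formula.realize_inf, Formula.realize_iInf,
    Formula.realize_equal, Term.realize_var, Sum.elim_inl, Sum.elim_inr]
  constructor
  · rintro ⟨w, hψ, hw⟩
    have : Nonempty C.carrier := ⟨z (Classical.arbitrary α)⟩
    obtain ⟨v, rfl⟩ : ∃ v : X → C.carrier, (fun x : V => v x) = w :=
      ⟨Function.extend (↑) w fun _ => Classical.arbitrary _,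
        funext fun x => Subtype.val_injective.extend_apply _ _ x⟩
    exact ⟨v, funext hw, (realize_ψV z v).1 hψ⟩
  · rintro ⟨v, rfl, hψ⟩
    exact ⟨fun x => v x, (realize_ψV _ v).2 hψ, fun _ => rfl⟩

theorem exists_formula_realize_iff_exists_satisfies {X : Type u} {α : Type} [Finite α]
    [Nonempty α] (Y : Finset (L.Term X × L.Term X)) (a : α → X) :
    ∃ φ : L.Formula α, ∀ (C : Alg L) (z : α → C.carrier),
      φ.Realize z ↔ ∃ v : X → C.carrier, v ∘ a = z ∧ Satisfies v (Y : Set _) := by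
  obtain ⟨φ, hφ⟩ := exists_formula_realize_iff_exists
    (Formula.iInf fun e : Y => e.1.1.equal e.1.2) a
  refine ⟨φ, fun C z => (hφ C z).trans ?_⟩
  simp only [Formula.realize_iInf, Formula.realize_equal, Satisfies, Subtype.forall,
    Finset.mem_coe]

theorem FunctionalIn.exists_definedBy {n : ℕ} {φ : L.Formula (Fin (n + 1))}
    (hφ : FunctionalIn K φ) : ∃ g : PartialFunOn K n, DefinedBy g φ := by
  refine ⟨fun C _ x => ⟨∃ b, φ.Realize (Fin.snoc x b : Fin (n + 1) → C.carrier),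
    Exists.choose⟩, fun C hC x b => ⟨?_, fun hb => ?_⟩⟩
  · rintro ⟨hx, rfl⟩
    exact hx.choose_spec
  · have hx : ∃ b, φ.Realize (Fin.snoc x b : Fin (n + 1) → C.carrier) := ⟨b, hb⟩
    exact ⟨hx, hφ C hC x _ _ hx.choose_spec hb⟩

theorem DefinedBy.isOperationOn {n : ℕ} {g : PartialFunOn K n} {φ : L.Formula (Fin (n + 1))}
    (hg : DefinedBy g φ) (hφ : PreservedByHomsOn K φ) : IsOperationOn g := by
  intro A B hA hB h x b hb
  have := hφ A B hA hB h _ ((hg A hA x b).1 hb)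
  rw [← Function.comp_def h, Fin.comp_snoc] at this
  exact (hg B hB _ _).2 this

/-- Equations in two copies of the variables: two valuations `v` and `w` satisfy them, on the first
and on the second copy, when both satisfy `Y` and they agree on `S`. -/
def agreementEqs {X : Type u} (Y : Set (L.Term X × L.Term X)) (S : Set X) :
    Set (L.Term (X ⊕ X) × L.Term (X ⊕ X)) :=
  Prod.map (Term.relabel Sum.inl) (Term.relabel Sum.inl) '' Y ∪
    Prod.map (Term.relabel Sum.inr) (Term.relabel Sum.inr) '' Y ∪
      (fun a => (Term.var (Sum.inl a), Term.var (Sum.inr a))) '' S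

theorem satisfies_agreementEqs {X : Type u} {Y : Set (L.Term X × L.Term X)} {S : Set X}
    {C : Alg L} {v : X ⊕ X → C.carrier} :
    Satisfies v (agreementEqs Y S) ↔ Satisfies (v ∘ Sum.inl) Y ∧ Satisfies (v ∘ Sum.inr) Y ∧
      ∀ a ∈ S, v (Sum.inl a) = v (Sum.inr a) := by
  simp only [Satisfies, agreementEqs, Set.mem_union, or_imp, forall_and, Set.forall_mem_image,
    Prod.map_fst, Prod.map_snd, Term.realize_relabel, Term.realize_var, and_assoc]

theorem exists_finset_subset_agreementEqs {X : Type u} {Y : Set (L.Term X × L.Term X)}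
    {S : Set X} {E : Finset (L.Term (X ⊕ X) × L.Term (X ⊕ X))} (hE : ↑E ⊆ agreementEqs Y S) :
    ∃ (Y₀ : Finset (L.Term X × L.Term X)) (S₀ : Finset X), ↑Y₀ ⊆ Y ∧ ↑S₀ ⊆ S ∧
      ↑E ⊆ agreementEqs (L := L) (X := X) Y₀ S₀ := by
  classical
  obtain ⟨E', E₃, rfl, hE', hE₃⟩ := Finset.subset_union_elim hE
  obtain ⟨E₁, E₂, rfl, hE₁, hE₂⟩ := Finset.subset_union_elim hE'
  obtain ⟨Y₁, hY₁, rfl⟩ := Finset.subset_set_image_iff.1 hE₁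
  obtain ⟨Y₂, hY₂, rfl⟩ := Finset.subset_set_image_iff.1 (hE₂.trans Set.sdiff_subset)
  obtain ⟨S₀, hS₀, rfl⟩ := Finset.subset_set_image_iff.1 (hE₃.trans Set.sdiff_subset)
  refine ⟨Y₁ ∪ Y₂, S₀, ?_, hS₀, ?_⟩
  · exact_mod_cast Set.union_subset hY₁ hY₂
  · simp only [Finset.coe_union, Finset.coe_image, agreementEqs]
    gcongr
    exacts [Set.subset_union_left, Set.subset_union_right]

variable [L.IsAlgebraic] {P : Alg L} {s : Set P.carrier} {d : P.carrier}

theorem exists_finset_of_mem_dominion (hU : ClosedUnderUprod K)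
    (hd : d ∈ dominion K P.carrier s) :
    ∃ (Y : Finset (L.Term P.carrier × L.Term P.carrier)) (S : Finset P.carrier),
      ↑Y ⊆ posDiagram P ∧ ↑S ⊆ s ∧ ∀ C ∈ K, ∀ v w : P.carrier → C.carrier,
        Satisfies v (Y : Set _) → Satisfies w (Y : Set _) → (∀ a ∈ S, v a = w a) → v d = w d := by
  have forall_satisfies (C) (hC : C ∈ K) (v : P.carrier ⊕ P.carrier → C.carrier)
      (hv : Satisfies v (agreementEqs (posDiagram P) s)) : v (Sum.inl d) = v (Sum.inr d) := by
    obtain ⟨hv₁, hv₂, agree⟩ := satisfies_agreementEqs.1 hv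
    obtain ⟨g, hg⟩ := exists_hom_of_satisfies_posDiagram hv₁
    obtain ⟨h, hh⟩ := exists_hom_of_satisfies_posDiagram hv₂
    simp only [funext_iff, Function.comp_apply] at hg hh
    rw [← hg, ← hh]
    exact hd C hC g h fun a ha => by rw [hg, hh, agree a ha]
  obtain ⟨E, hE, hEd⟩ := exists_finset_of_forall_satisfies hU (s := Term.var (Sum.inl d))
    (t := Term.var (Sum.inr d)) forall_satisfies
  obtain ⟨Y, S, hY, hS, hEYS⟩ := exists_finset_subset_agreementEqs hE
  refine ⟨Y, S, hY, hS, fun C hC v w hv hw agree => ?_⟩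
  exact hEd C hC (Sum.elim v w) fun e he =>
    (satisfies_agreementEqs (v := Sum.elim v w)).2 ⟨hv, hw, agree⟩ e (hEYS he)

theorem exists_implicitOp_of_mem_dominion (hU : ClosedUnderUprod K) (hP : P ∈ K)
    (hs : s.Nonempty) (hd : d ∈ dominion K P.carrier s) :
    ∃ n > 0, ∃ g : PartialFunOn K n, IsImplicitOp g ∧
      ∃ a : Fin n → P.carrier, (∀ i, a i ∈ s) ∧ d ∈ g P hP a := by
  classical
  obtain ⟨s₀, hs₀⟩ := hs
  obtain ⟨Y, S, hY, hSs, hYS⟩ := exists_finset_of_mem_dominion hU hd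
  obtain ⟨n, a, ha⟩ := (insert s₀ S).finite_toSet.fin_embedding
  have a_mem (i : Fin n) : a i ∈ s := by
    refine Set.insert_subset hs₀ hSs ?_
    rw [← Finset.coe_insert, ← ha]
    exact Set.mem_range_self i
  have exists_a (b) (hb : b ∈ insert s₀ S) : ∃ i, a i = b := by
    rwa [← Finset.mem_coe, ← ha] at hb
  have : Nonempty (Fin n) := ⟨(exists_a s₀ (Finset.mem_insert_self _ _)).choose⟩
  obtain ⟨φ, hφ⟩ := exists_formula_realize_iff_exists_satisfies Y (Fin.snoc a d)
  have functional : FunctionalIn K φ := by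
    intro C hC x b₁ b₂ h₁ h₂
    obtain ⟨v, hv, hvY⟩ := (hφ C _).1 h₁
    obtain ⟨w, hw, hwY⟩ := (hφ C _).1 h₂
    rw [Fin.comp_snoc, Fin.snoc_inj] at hv hw
    rw [← hv.2, ← hw.2]
    refine hYS C hC v w hvY hwY fun b hb => ?_
    obtain ⟨i, rfl⟩ := exists_a b (Finset.mem_insert_of_mem hb)
    exact congrFun (hv.1.trans hw.1.symm) i
  have preserved : PreservedByHomsOn K φ := by
    intro A B _ _ h z hz
    obtain ⟨v, rfl, hv⟩ := (hφ A z).1 hz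
    exact (hφ B _).2 ⟨h ∘ v, rfl, hv.map h⟩
  obtain ⟨g, hg⟩ := functional.exists_definedBy
  refine ⟨n, Fin.pos_iff_nonempty.2 this, g, ⟨⟨φ, hg⟩, hg.isOperationOn preserved⟩, a, a_mem, ?_⟩
  exact (hg P hP _ _).2 ((hφ P _).2
    ⟨id, rfl, fun e he => satisfies_posDiagram (Hom.id L _) e (hY he)⟩)

end ImplicitOperations

section Expansions

variable {K : Set (Alg L)}

theorem IsConjEq.realize_pi {ι : Type u} (A : ι → Alg L) {α : Type v} {k : ℕ}
    {φ : L.BoundedFormula α k} (hφ : IsConjEq φ) (x : α → (Alg.pi A).carrier)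
    (xs : Fin k → (Alg.pi A).carrier)
    (h : ∀ i, φ.Realize (piProj A i ∘ x) (piProj A i ∘ xs)) : φ.Realize x xs := by
  induction hφ with
  | top => exact BoundedFormula.realize_top.2 trivial
  | equal t₁ t₂ =>
    funext i
    have := h i
    simp only [BoundedFormula.Realize, ← Sum.comp_elim, HomClass.realize_term] at this
    exact this
  | inf _ _ ih₁ ih₂ =>
    simp only [BoundedFormula.realize_inf] at h ⊢
    exact ⟨ih₁ fun i => (h i).1, ih₂ fun i => (h i).2⟩

theorem IsPP.realize_pi {ι : Type u} (A : ι → Alg L) {α : Type v} {k : ℕ}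
    {φ : L.BoundedFormula α k} (hφ : IsPP φ) (x : α → (Alg.pi A).carrier)
    (xs : Fin k → (Alg.pi A).carrier)
    (h : ∀ i, φ.Realize (piProj A i ∘ x) (piProj A i ∘ xs)) : φ.Realize x xs := by
  induction hφ with
  | of_conjEq hφ => exact hφ.realize_pi A x xs h
  | ex _ ih =>
    simp only [BoundedFormula.realize_ex] at h ⊢
    choose b hb using h
    refine ⟨(b : (Alg.pi A).carrier), ih _ fun i => ?_⟩
    exact (Fin.comp_snoc (piProj A i) xs b).symm ▸ hb i

theorem IsPP.preservedByProdsOn {α : Type v} {φ : L.Formula α} (hφ : IsPP φ) :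
    PreservedByProdsOn K φ := by
  intro ι A _ x h
  refine hφ.realize_pi A x default fun i => ?_
  rw [Subsingleton.elim (piProj A i ∘ default) default]
  exact h i

theorem DefinedBy.mem_pi {n : ℕ} {f : PartialFunOn K n} {φ : L.Formula (Fin (n + 1))}
    (hf : DefinedBy f φ) (hφ : IsPP φ) {κ : Type u} {A : κ → Alg L} (hA : ∀ k, A k ∈ K)
    (hpi : Alg.pi A ∈ K) {x : Fin n → (Alg.pi A).carrier} {b : (Alg.pi A).carrier}
    (hb : ∀ k, piProj A k b ∈ f (A k) (hA k) (piProj A k ∘ x)) : b ∈ f (Alg.pi A) hpi x := by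
  refine (hf _ hpi x b).2 (hφ.preservedByProdsOn κ A hA _ fun k => ?_)
  have : φ.Realize (piProj A k ∘ (Fin.snoc x b : Fin (n + 1) → (Alg.pi A).carrier)) :=
    (Fin.comp_snoc (piProj A k) x b).symm ▸ (hf _ (hA k) _ _).1 (hb k)
  exact this

theorem closedUnderProd_expClass (hP : ClosedUnderProd K) {ι : Type u} {ar : ι → ℕ}
    {f : ∀ i, PartialFunOn K (ar i)}
    (hf : ∀ i, ∃ φ : L.Formula (Fin (ar i + 1)), IsPP φ ∧ DefinedBy (f i) φ) :
    ClosedUnderProd (expClass K ar f) := by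
  intro κ B hB
  choose hBK hBf using hB
  refine ⟨hP κ (fun k => algReduct (B k)) hBK, fun i x => ?_⟩
  obtain ⟨φ, hpp, hdef⟩ := hf i
  exact hdef.mem_pi hpp hBK _ fun k => hBf k i fun j => x j k

theorem closedUnderSub_sClosure (S : Set (Alg L)) : ClosedUnderSub (SClosure S) := by
  rintro A B ⟨C, hC, ⟨e⟩⟩ ⟨e'⟩
  exact ⟨C, hC, ⟨e.comp e'⟩⟩

theorem closedUnderProd_sClosure [L.IsAlgebraic] {S : Set (Alg L)} (hS : ClosedUnderProd S) :
    ClosedUnderProd (SClosure S) := by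
  intro κ A hA
  choose B hB e using hA
  let toPi : (Alg.pi A).carrier →[L] (Alg.pi B).carrier :=
    homOfMapFun (fun x k => (e k).some (x k)) fun f x =>
      funext fun k => (e k).some.map_fun f fun j => x j k
  have toPi_injective : Function.Injective toPi := fun x y hxy =>
    funext fun k => (e k).some.injective (congrFun hxy k)
  exact ⟨Alg.pi B, hS κ B hB, ⟨Embedding.ofInjective toPi_injective⟩⟩

variable [L.IsAlgebraic] {N : FirstOrder.Language.{u, u}}

theorem nonempty_embedding_algReduct {A B : Alg (L.sum N)}
    (e : A.carrier ↪[L.sum N] B.carrier) :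
    Nonempty ((algReduct A).carrier ↪[L] (algReduct B).carrier) := by
  let g : (algReduct A).carrier →[L] (algReduct B).carrier :=
    homOfMapFun e fun f x => e.map_fun (Sum.inl f) x
  have hg : Function.Injective g := e.injective
  exact ⟨Embedding.ofInjective hg⟩

/-- `M` is a class of expansions of members of `K`, closed under subalgebras and products, in which
every nonempty subalgebra is closed under dominions relative to `K`. Beth companions have this
property. -/
structure IsDominionClosedExpansion (K : Set (Alg L)) (M : Set (Alg (L.sum N))) : Prop where
  closedUnderSub : ClosedUnderSub M
  closedUnderProd : ClosedUnderProd M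
  algReduct_mem : ∀ A ∈ M, algReduct A ∈ K
  dominion_subset : ∀ P ∈ M, ∀ s : Set P.carrier, s.Nonempty →
    dominion K (algReduct P).carrier s ⊆ (Substructure.closure (L.sum N) s : Set P.carrier)

instance isAlgebraic_newLang {ι : Type u} (ar : ι → ℕ) : (newLang ar).IsAlgebraic :=
  fun _ => inferInstanceAs (IsEmpty PEmpty)

theorem IsBethCompanionVia.isDominionClosedExpansion (hK : IsQuasivariety K) {ι : Type u}
    {ar : ι → ℕ} {f : ∀ i, PartialFunOn K (ar i)} {M : Set (Alg (L.sum (newLang ar)))}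
    (hM : IsBethCompanionVia K ar f M) : IsDominionClosedExpansion K M := by
  obtain ⟨-, hS, hP, hU⟩ := hK
  obtain ⟨⟨-, hf, rfl⟩, interpolates⟩ := hM
  have reduct_mem (A) (hA : A ∈ SClosure (expClass K ar f)) : algReduct A ∈ K := by
    obtain ⟨B, ⟨hB, -⟩, ⟨e⟩⟩ := hA
    exact hS _ _ hB (nonempty_embedding_algReduct e)
  refine ⟨closedUnderSub_sClosure _, closedUnderProd_sClosure
    (closedUnderProd_expClass hP fun i => (hf i).2.1), reduct_mem, fun P hP s hs d hd => ?_⟩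
  obtain ⟨n, hn, g, hg, a, ha, hda⟩ :=
    exists_implicitOp_of_mem_dominion hU (reduct_mem P hP) hs hd
  obtain ⟨T, hT⟩ := interpolates n hn g hg
  obtain ⟨t, -, rfl⟩ := hT P hP (reduct_mem P hP) a d hda
  exact t.realize_mem (M := P.carrier) _ fun i => Substructure.subset_closure (ha i)

end Expansions

section CompatibleRelations

variable {K : Set (Alg L)} {A B : Alg L}

theorem IsCongruenceOn.isCompatible {θ : A.carrier → A.carrier → Prop}
    (hθ : IsCongruenceOn A θ) : IsCompatible A θ :=
  hθ.2

theorem IsCompatible.map {S : A.carrier → A.carrier → Prop} (hS : IsCompatible A S)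
    (g : A.carrier →[L] B.carrier) : IsCompatible B (Relation.Map S g g) := by
  intro k f x y hxy
  choose a b hab ha hb using hxy
  obtain rfl : g ∘ a = x := funext ha
  obtain rfl : g ∘ b = y := funext hb
  exact ⟨_, _, hS k f a b hab, g.map_fun f a, g.map_fun f b⟩

theorem IsCompatible.comp {S T : A.carrier → A.carrier → Prop} (hS : IsCompatible A S)
    (hT : IsCompatible A T) : IsCompatible A (Relation.Comp S T) := by
  intro k f x y hxy
  choose z hxz hzy using hxy
  exact ⟨Structure.funMap f z, hS k f x z hxz, hT k f z y hzy⟩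

/-- A compatible relation on a member of `K` which is reflexive on its range contains every pair of
the `K`-congruence it generates whose entries are related to themselves. Relations that are
reflexive only on a subalgebra are allowed, so that congruences of subalgebras are covered. -/
def CompatibleRelationsAreCongruences (K : Set (Alg L)) : Prop :=
  ∀ B ∈ K, ∀ R : B.carrier → B.carrier → Prop, IsCompatible B R → (∀ a b, R a b → R b b) →
    ∀ x y, R x x → R y y → relCongGen K B R x y → R x y

namespace CompatibleRelationsAreCongruences

variable [L.IsAlgebraic]

theorem isRelCong (hcong : CompatibleRelationsAreCongruences K) (hS : ClosedUnderSub K)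
    (hP : ClosedUnderProd K) (hA : A ∈ K) {S : A.carrier → A.carrier → Prop}
    (hcomp : IsCompatible A S) (hrefl : ∀ a, S a a) : IsRelCong K A S := by
  have : relCongGen K A S = S := le_antisymm
    (fun x y => hcong A hA S hcomp (fun _ b _ => hrefl b) x y (hrefl x) (hrefl y))
    (le_relCongGen S)
  exact this ▸ isRelCong_relCongGen hS hP S

theorem isCongruenceOn_iff (hcong : CompatibleRelationsAreCongruences K) (hS : ClosedUnderSub K)
    (hP : ClosedUnderProd K) (hA : A ∈ K) {θ : A.carrier → A.carrier → Prop} :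
    IsCongruenceOn A θ ↔ IsRelCong K A θ :=
  ⟨fun hθ => hcong.isRelCong hS hP hA hθ.isCompatible hθ.1.refl, fun hθ => hθ.1⟩

theorem isVariety (hcong : CompatibleRelationsAreCongruences K) (hS : ClosedUnderSub K)
    (hP : ClosedUnderProd K) : IsVariety K := by
  refine ⟨fun A B hA h hh => ?_, hS, hP⟩
  obtain ⟨hker, hquot⟩ := (hcong.isCongruenceOn_iff hS hP hA).1 (isCongruenceOn_homKer h)
  exact hS _ _ hquot (nonempty_embedding_of_homKer_eq hh (homKer_quotMk hker).symm)

theorem congPermutableClass (hcong : CompatibleRelationsAreCongruences K)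
    (hS : ClosedUnderSub K) (hP : ClosedUnderProd K) : CongPermutableClass K := by
  have comp_swap {A} (hA : A ∈ K) {θ φ : A.carrier → A.carrier → Prop}
      (hθ : IsCongruenceOn A θ) (hφ : IsCongruenceOn A φ) {x y : A.carrier}
      (hxy : Relation.Comp θ φ x y) : Relation.Comp φ θ x y := by
    obtain ⟨hcomp, -⟩ := hcong.isRelCong hS hP hA (hθ.isCompatible.comp hφ.isCompatible)
      fun a => ⟨a, hθ.1.refl a, hφ.1.refl a⟩
    obtain ⟨z, hyz, hzx⟩ := hcomp.1.symm hxy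
    exact ⟨z, hφ.1.symm hzx, hθ.1.symm hyz⟩
  exact fun A hA θ φ hθ hφ x y => ⟨comp_swap hA hθ hφ, comp_swap hA hφ hθ⟩

theorem congDistributiveClass (hcong : CompatibleRelationsAreCongruences K)
    (hS : ClosedUnderSub K) (hP : ClosedUnderProd K) (hRCD : RelCongDistributive K) :
    CongDistributiveClass K := by
  intro A hA θ φ ψ hθ hφ hψ x y
  have congJoin_eq (σ τ) : congJoin A σ τ = relCongJoin K A σ τ :=
    funext₂ fun _ _ => propext <| forall_congr' fun ρ =>
      imp_congr_left (hcong.isCongruenceOn_iff hS hP hA)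
  rw [hcong.isCongruenceOn_iff hS hP hA] at hθ hφ hψ
  rw [congJoin_eq, congJoin_eq]
  exact hRCD A hA θ φ ψ hθ hφ hψ x y

theorem hasCEP (hcong : CompatibleRelationsAreCongruences K) (hS : ClosedUnderSub K)
    (hP : ClosedUnderProd K) : HasCEP K := by
  intro A B _ hB e θ hθ
  let R := Relation.Map θ e e
  have R_refl (a) : R (e a) (e a) := ⟨a, a, hθ.1.refl a, rfl, rfl⟩
  have R_right_refl (a b) : R a b → R b b := by
    rintro ⟨_, b, -, rfl, rfl⟩
    exact R_refl b
  refine ⟨relCongGen K B R, (isRelCong_relCongGen hS hP R).1, fun x y => ⟨fun hxy => ?_, ?_⟩⟩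
  · exact le_relCongGen R _ _ ⟨x, y, hxy, rfl, rfl⟩
  · intro hxy
    obtain ⟨x', y', hθ', hx, hy⟩ := hcong B hB R (hθ.isCompatible.map e.toHom) R_right_refl
      _ _ (R_refl x) (R_refl y) hxy
    exact e.injective hx ▸ e.injective hy ▸ hθ'

end CompatibleRelationsAreCongruences

end CompatibleRelations

section CongruencePreservation

variable {N : FirstOrder.Language.{u, u}} {K : Set (Alg L)} {M : Set (Alg (L.sum N))}

theorem CongPreserving.relCongGen_eq (hCP : CongPreserving K M) {B : Alg (L.sum N)} (hB : B ∈ M)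
    (R : B.carrier → B.carrier → Prop) : relCongGen M B R = relCongGen K (algReduct B) R :=
  funext₂ fun _ _ => propext <| forall_congr' fun ρ => imp_congr_left (hCP B hB ρ)

theorem CongPreserving.relCongJoin_eq (hCP : CongPreserving K M) {B : Alg (L.sum N)} (hB : B ∈ M)
    (θ φ : B.carrier → B.carrier → Prop) :
    relCongJoin M B θ φ = relCongJoin K (algReduct B) θ φ :=
  funext₂ fun _ _ => propext <| forall_congr' fun ρ => imp_congr_left (hCP B hB ρ)

theorem CongPreserving.relCongDistributive (hCP : CongPreserving K M)
    (hreduct : ∀ A ∈ M, algReduct A ∈ K) (hRCD : RelCongDistributive K) :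
    RelCongDistributive M := by
  intro A hA θ φ ψ hθ hφ hψ x y
  rw [hCP A hA] at hθ hφ hψ
  rw [hCP.relCongJoin_eq hA, hCP.relCongJoin_eq hA]
  exact hRCD (algReduct A) (hreduct A hA) θ φ ψ hθ hφ hψ x y

variable [L.IsAlgebraic] [N.IsAlgebraic]

theorem IsDominionClosedExpansion.compatibleRelationsAreCongruences
    (hM : IsDominionClosedExpansion K M) (hCP : CongPreserving K M) (hK : IsQuasivariety K)
    (hRCD : RelCongDistributive K) (hsub : ClosedUnderNontrivialSub {A | IsRFSI K A}) :
    CompatibleRelationsAreCongruences M := by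
  intro B hB R hcomp hR x y hx hy hxy
  rw [hCP.relCongGen_eq hB] at hxy
  have hdom := mem_dominion_of_relCongGen hK hRCD hsub (hM.algReduct_mem B hB) hR hx hy hxy
  have hBB : B.prod B ∈ M := hM.closedUnderProd.prod_mem hM.closedUnderSub hB hB
  let S : (L.sum N).Substructure (B.prod B).carrier :=
    { carrier := {p | R p.1 p.2}
      fun_mem := fun {k} f p hp => hcomp k f (fun i => (p i).1) (fun i => (p i).2) hp }
  have hS : (x, y) ∈ Substructure.closure (L.sum N) (S : Set (B.prod B).carrier) :=
    hM.dominion_subset _ hBB _ ⟨(x, x), hx⟩ hdom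
  rwa [Substructure.closure_eq] at hS

theorem CongPreserving.isRFSI_iff (hCP : CongPreserving K M) (hSK : ClosedUnderSub K)
    (hSM : ClosedUnderSub M) (hreduct : ∀ A ∈ M, algReduct A ∈ K) {B : Alg (L.sum N)}
    (hB : B ∈ M) : IsRFSI M B ↔ IsRFSI K (algReduct B) := by
  rw [Impl.isRFSI_iff hSM, Impl.isRFSI_iff hSK]
  refine and_congr (iff_of_true hB (hreduct B hB)) ?_
  exact forall₃_congr fun ι _ ρ => imp_congr_left (forall_congr' fun i => hCP B hB (ρ i))

theorem CongPreserving.closedUnderNontrivialSub_isRFSI (hCP : CongPreserving K M)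
    (hSK : ClosedUnderSub K) (hSM : ClosedUnderSub M) (hreduct : ∀ A ∈ M, algReduct A ∈ K)
    (hsub : ClosedUnderNontrivialSub {A | IsRFSI K A}) :
    ClosedUnderNontrivialSub {A | IsRFSI M A} := by
  rintro A B hB ⟨e⟩ hA
  have isRFSI_iff {C} (hC : C ∈ M) := hCP.isRFSI_iff hSK hSM hreduct hC
  exact (isRFSI_iff (hSM A B hB.1 ⟨e⟩)).2 <|
    hsub _ _ ((isRFSI_iff hB.1).1 hB) (nonempty_embedding_algReduct e) hA

theorem statement_15_general (hK : IsQuasivariety K) (hRCD : RelCongDistributive K)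
    (hsub : ClosedUnderNontrivialSub {A | IsRFSI K A}) (hM : IsDominionClosedExpansion K M)
    (hCP : CongPreserving K M) :
    IsVariety M ∧ CongPermutableClass M ∧ CongDistributiveClass M ∧ HasCEP M ∧
      ClosedUnderNontrivialSub {A | IsRFSI M A} :=
  have hcong := hM.compatibleRelationsAreCongruences hCP hK hRCD hsub
  have hS := hM.closedUnderSub
  have hP := hM.closedUnderProd
  ⟨hcong.isVariety hS hP, hcong.congPermutableClass hS hP,
    hcong.congDistributiveClass hS hP (hCP.relCongDistributive hM.algReduct_mem hRCD),
    hcong.hasCEP hS hP,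
    hCP.closedUnderNontrivialSub_isRFSI hK.2.1 hS hM.algReduct_mem hsub⟩

end CongruencePreservation

/-- Let `K` be a relatively congruence distributive quasivariety whose class
of relatively finitely subdirectly irreducible members is closed under nontrivial subalgebras.
Then every congruence preserving Beth companion `M` of `K` is an arithmetical variety with the
congruence extension property whose class of finitely subdirectly irreducible members is
closed under nontrivial subalgebras. -/
theorem statement_15 {L : FirstOrder.Language.{u, u}} [L.IsAlgebraic]
    {K : Set (Alg L)} (hK : IsQuasivariety K) (hRCD : RelCongDistributive K)
    (hsub : ∀ A B : Alg L, IsRFSI K B → Nonempty (A.carrier ↪[L] B.carrier) →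
      (∃ x y : A.carrier, x ≠ y) → IsRFSI K A)
    {ι : Type u} (ar : ι → ℕ) (f : ∀ i, PartialFunOn K (ar i))
    (M : Set (Alg (L.sum (newLang ar))))
    (hM : IsBethCompanionVia K ar f M) (hCP : CongPreserving K M) :
    IsVariety M ∧ CongPermutableClass M ∧ CongDistributiveClass M ∧ HasCEP M ∧
      ∀ A B : Alg (L.sum (newLang ar)), IsRFSI M B →
        Nonempty (A.carrier ↪[L.sum (newLang ar)] B.carrier) →
          (∃ x y : A.carrier, x ≠ y) → IsRFSI M A := by
  exact statement_15_general hK hRCD hsub (hM.isDominionClosedExpansion hK) hCP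

end Impl
end

section
/- The variety of monoids and the variety of commutative monoids lack a Beth companion. -/
namespace Impl

open FirstOrder Language

universe u v

variable {L : FirstOrder.Language.{u, u}}

/-- The language of monoids: one binary operation and one constant. -/
def Lmon : FirstOrder.Language.{0, 0} where
  Functions := fun n => match n with
    | 0 => PUnit
    | 2 => PUnit
    | _ => PEmpty
  Relations := fun _ => PEmpty

instance : Lmon.IsAlgebraic := fun _ => inferInstanceAs (IsEmpty PEmpty)

/-- The multiplication symbol. -/
def mulSym : Lmon.Functions 2 := PUnit.unit

/-- The unit symbol. -/
def oneSym : Lmon.Functions 0 := PUnit.unit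

/-- The interpretation of the multiplication symbol. -/
def mmul {M : Type} [Lmon.Structure M] (a b : M) : M :=
  Structure.funMap (L := Lmon) mulSym ![a, b]

/-- The interpretation of the unit symbol. -/
def mone {M : Type} [Lmon.Structure M] : M :=
  Structure.funMap (L := Lmon) oneSym ![]

/-- The variety of monoids, as a class of `Lmon`-algebras. -/
def MonCl : Set (Alg Lmon) :=
  { A | (∀ a b c : A.carrier, mmul (mmul a b) c = mmul a (mmul b c)) ∧
        (∀ a : A.carrier, mmul a mone = a) ∧ ∀ a : A.carrier, mmul mone a = a }

/-- The variety of commutative monoids, as a class of `Lmon`-algebras. -/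
def CommMonCl : Set (Alg Lmon) :=
  { A | A ∈ MonCl ∧ ∀ a b : A.carrier, mmul a b = mmul b a }

/-!
Let `K` be one of the two varieties. A pp definable extendable operation can be made total:
adjoining its values at finitely many tuples, then at all tuples by an ultraproduct, and iterating
along an `ω`-chain, every `A ∈ K` embeds into some `E ∈ K` on which all the new operations are
total. Since pp formulas are preserved by products, for every term `t` of a pp expansion and all
`x, y` in `E`, the pair `(t x, t y)` lies in the dominion of `(x, y)` in `E × E`. In both varieties
the dominion of a single element `w` consists of elements `b` with `b * w ^ p = w ^ q` for some
`p` and `q`.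

If `K` had a Beth companion, the implicit operation of taking inverses would be interpolated by
terms. Take a unit `u` of infinite order and an element `z` of `A`, and a term `t` with
`t u = u⁻¹`. Comparing the two coordinates of the pair `(t z, t u)` gives `t z * z ^ p = z ^ q` and
`u⁻¹ * u ^ p = u ^ q`, so `p = q + 1`. Hence `y * z ^ (q + 1) = z ^ q` is solvable in an extension
of `A`. This fails for `z = 2` in `∏ N, ZMod (2 ^ N)`, where some `c` satisfies
`z ^ (q + 1) * c = 0` but `z ^ q * c ≠ 0`.
-/

section Ultraproducts

variable {ι : Type u} {F : Ultrafilter ι} {B : ι → Alg L}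

/-- The class in the ultraproduct `Alg.uprod F B` of a family of elements. -/
def uprodMk (F : Ultrafilter ι) {B : ι → Alg L} (b : ∀ i, (B i).carrier) :
    (Alg.uprod F B).carrier :=
  (b : Filter.Product (F : Filter ι) fun i => (B i).carrier)

theorem uprodMk_eq_iff {b c : ∀ i, (B i).carrier} :
    uprodMk F b = uprodMk F c ↔ ∀ᶠ i in (F : Filter ι), b i = c i :=
  Quotient.eq''

theorem uprodMk_surjective : Function.Surjective (uprodMk F (B := B)) :=
  Quotient.exists_rep

theorem funMap_uprodMk {n : ℕ} (g : L.Functions n) (x : Fin n → ∀ i, (B i).carrier) :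
    Structure.funMap g (fun k => uprodMk F (x k)) =
      uprodMk F fun i => Structure.funMap g fun k => x k i :=
  Ultraproduct.funMap_cast g x

theorem relMap_uprodMk {n : ℕ} (r : L.Relations n) (x : Fin n → ∀ i, (B i).carrier) :
    Structure.RelMap r (fun k => uprodMk F (x k)) ↔
      ∀ᶠ i in (F : Filter ι), Structure.RelMap r fun k => x k i :=
  relMap_quotient_mk' ((F : Filter ι).productSetoid fun i => (B i).carrier) r x

theorem realize_uprodMk [∀ i, Nonempty (B i).carrier] {α : Type*} (φ : L.Formula α)
    (x : α → ∀ i, (B i).carrier) :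
    φ.Realize (fun a => uprodMk F (x a)) ↔ ∀ᶠ i in (F : Filter ι), φ.Realize fun a => x a i :=
  Ultraproduct.realize_formula_cast φ x

/-- A family of maps `h i : A → B i` that, on each finite configuration of `A`, is eventually
an embedding induces an embedding of `A` into the ultraproduct. -/
def uprodLift {A : Alg L} (h : ∀ i, A.carrier → (B i).carrier)
    (inj : ∀ a b, (∀ᶠ i in (F : Filter ι), h i a = h i b) → a = b)
    (map_fun : ∀ {n : ℕ} (g : L.Functions n) (x : Fin n → A.carrier),
      ∀ᶠ i in (F : Filter ι), h i (Structure.funMap g x) = Structure.funMap g (h i ∘ x))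
    (map_rel : ∀ {n : ℕ} (r : L.Relations n) (x : Fin n → A.carrier),
      (∀ᶠ i in (F : Filter ι), Structure.RelMap r (h i ∘ x)) ↔ Structure.RelMap r x) :
    A.carrier ↪[L] (Alg.uprod F B).carrier where
  toFun a := uprodMk F fun i => h i a
  inj' a b hab := inj a b (uprodMk_eq_iff.1 hab)
  map_fun' g x := (uprodMk_eq_iff.2 (map_fun g x)).trans (funMap_uprodMk g _).symm
  map_rel' r x := (relMap_uprodMk r _).trans (map_rel r x)

theorem mem_uprod_of_eventually_mem {K : Set (Alg L)} {n : ℕ} {g : PartialFunOn K n}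
    (hg : IsImplicit g) [∀ i, Nonempty (B i).carrier] (hB : ∀ i, B i ∈ K)
    (hU : Alg.uprod F B ∈ K) {x : Fin n → ∀ i, (B i).carrier} {b : ∀ i, (B i).carrier}
    (hb : ∀ᶠ i in (F : Filter ι), b i ∈ g (B i) (hB i) fun k => x k i) :
    uprodMk F b ∈ g (Alg.uprod F B) hU fun k => uprodMk F (x k) := by
  obtain ⟨φ, hφ⟩ := hg
  have snoc_apply (i : ι) : (fun k => (Fin.snoc x b : Fin (n + 1) → ∀ i, (B i).carrier) k i) =
      Fin.snoc (fun k => x k i) (b i) :=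
    Fin.comp_snoc (fun y : ∀ i, (B i).carrier => y i) x b
  have h : φ.Realize fun k => uprodMk F ((Fin.snoc x b : Fin (n + 1) → ∀ i, (B i).carrier) k) := by
    refine (realize_uprodMk φ _).2 (hb.mono fun i hi => ?_)
    rw [snoc_apply]
    exact (hφ _ _ _ _).1 hi
  rw [hφ]
  exact (congrArg φ.Realize (Fin.comp_snoc (uprodMk F) x b)).mp h

/-- An algebra covered by embedded copies of the `B i` embeds into their ultraproduct. -/
noncomputable def uprodOfCover [∀ i, Nonempty (B i).carrier] {D : Alg L}
    (e : ∀ i, (B i).carrier ↪[L] D.carrier)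
    (cover : ∀ d, ∀ᶠ i in (F : Filter ι), d ∈ Set.range (e i)) :
    D.carrier ↪[L] (Alg.uprod F B).carrier :=
  have right_inv (d : D.carrier) :
      ∀ᶠ i in (F : Filter ι), e i (Function.invFun (e i) d) = d :=
    (cover d).mono fun _ => Function.invFun_eq
  have right_inv_comp {n : ℕ} (x : Fin n → D.carrier) :
      ∀ᶠ i in (F : Filter ι), e i ∘ (Function.invFun (e i) ∘ x) = x :=
    (Filter.eventually_all.2 fun k => right_inv (x k)).mono fun _ => funext
  uprodLift (fun i => Function.invFun (e i))
    (fun a b hab => by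
      obtain ⟨i, hab, ha, hb⟩ := (hab.and ((right_inv a).and (right_inv b))).exists
      rw [← ha, hab, hb])
    (fun g x => by
      filter_upwards [right_inv (Structure.funMap g x), right_inv_comp x] with i hg hx
      refine (e i).injective ?_
      rw [hg, (e i).map_fun, hx])
    (fun r x => by
      rw [Filter.eventually_congr (q := fun _ => Structure.RelMap r x), Filter.eventually_const]
      filter_upwards [right_inv_comp x] with i hx
      rw [← (e i).map_rel, hx])

end Ultraproducts

section ClosureProperties

variable {K : Set (Alg L)}

theorem IsVariety.closedUnderUprod (hK : IsVariety K) : ClosedUnderUprod K := fun ι F A hA =>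
  let quotientMap : (Alg.pi A).carrier →[L] (Alg.uprod F A).carrier :=
    { toFun := uprodMk F
      map_fun' := fun g x => (funMap_uprodMk g x).symm
      map_rel' := fun r x h => (relMap_uprodMk r x).2 (.of_forall h) }
  hK.1 _ _ (hK.2.2 ι A hA) quotientMap uprodMk_surjective

theorem IsVariety.isQuasivariety (hK : IsVariety K) : IsQuasivariety K :=
  ⟨fun _ _ hA ⟨e⟩ => hK.1 _ _ hA e.toHom e.surjective, hK.2.1, hK.2.2, hK.closedUnderUprod⟩

theorem IsQuasivariety.isUniversalClass (hK : IsQuasivariety K) : IsUniversalClass K :=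
  ⟨hK.1, hK.2.1, hK.2.2.2⟩

theorem IsQuasivariety.prod_mem (hK : IsQuasivariety K) {A B : Alg L} (hA : A ∈ K) (hB : B ∈ K) :
    Alg.prod A B ∈ K := by
  let C : ULift.{u} Bool → Alg L := fun i => bif i.down then A else B
  let pair : (Alg.prod A B).carrier ↪[L] (Alg.pi C).carrier :=
    { toFun := fun x => fun
        | ⟨true⟩ => x.1
        | ⟨false⟩ => x.2
      inj' := fun x y h => Prod.ext (congrFun h ⟨true⟩) (congrFun h ⟨false⟩)
      map_fun' := fun g x => funext fun i => by rcases i with ⟨_ | _⟩ <;> rfl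
      map_rel' := fun r x => ⟨fun h => ⟨h ⟨true⟩, h ⟨false⟩⟩, fun h => by
        rintro ⟨_ | _⟩
        exacts [h.2, h.1]⟩ }
  refine hK.2.1 _ _ (hK.2.2.1 _ C ?_) ⟨pair⟩
  rintro ⟨_ | _⟩
  exacts [hB, hA]

end ClosureProperties

section TotalExtension

variable {K : Set (Alg L)}

theorem InExtPP.isImplicitOp {n : ℕ} {g : PartialFunOn K n} (hg : InExtPP g) : IsImplicitOp g :=
  ⟨hg.2.1.imp fun _ => And.right, hg.1⟩

theorem IsOperationOn.dom_map {n : ℕ} {g : PartialFunOn K n} (hg : IsOperationOn g)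
    {A B : Alg L} {hA : A ∈ K} (hB : B ∈ K) (h : A.carrier →[L] B.carrier)
    {x : Fin n → A.carrier} (hx : (g A hA x).Dom) : (g B hB fun i => h (x i)).Dom :=
  (hg A B hA hB h x _ (Part.get_mem hx)).1

variable {ι : Type u} {ar : ι → ℕ} {f : ∀ i, PartialFunOn K (ar i)}

theorem exists_extension_dom_finset (hop : ∀ i, IsOperationOn (f i))
    (hext : ∀ i, Extendable (f i)) {A : Alg L} (hA : A ∈ K)
    (s : Finset (Σ i, Fin (ar i) → A.carrier)) :
    ∃ (B : Alg L) (hB : B ∈ K) (e : A.carrier ↪[L] B.carrier),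
      ∀ p ∈ s, (f p.1 B hB fun j => e (p.2 j)).Dom := by
  classical
  induction s using Finset.induction_on with
  | empty => exact ⟨A, hA, Embedding.refl L _, by simp⟩
  | insert p s _ ih =>
    obtain ⟨B, hB, e, he⟩ := ih
    obtain ⟨C, hC, e', he'⟩ := hext p.1 B hB fun j => e (p.2 j)
    refine ⟨C, hC, e'.comp e, Finset.forall_mem_insert _ _ _ |>.2 ⟨he', fun q hq => ?_⟩⟩
    exact (hop q.1).dom_map hC e'.toHom (he q hq)

theorem exists_extension_dom (hU : ClosedUnderUprod K) (hf : ∀ i, IsImplicitOp (f i))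
    (hext : ∀ i, Extendable (f i)) {A : Alg L} [hne : Nonempty A.carrier] (hA : A ∈ K) :
    ∃ (B : Alg L) (hB : B ∈ K) (e : A.carrier ↪[L] B.carrier),
      ∀ i (x : Fin (ar i) → A.carrier), (f i B hB fun j => e (x j)).Dom := by
  classical
  choose B hB e he using exists_extension_dom_finset (fun i => (hf i).2) hext hA
  have : ∀ s, Nonempty (B s).carrier := fun s => hne.map (e s)
  let F : Ultrafilter (Finset (Σ i, Fin (ar i) → A.carrier)) := Ultrafilter.of Filter.atTop
  let diag : A.carrier ↪[L] (Alg.uprod F B).carrier :=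
    uprodLift (fun s => e s)
      (fun a b hab => hab.exists.elim fun s hs => (e s).injective hs)
      (fun g x => .of_forall fun s => (e s).map_fun g x)
      (fun r x => by simp only [(e _).map_rel, Filter.eventually_const])
  refine ⟨Alg.uprod F B, hU _ F B hB, diag, fun i x => ?_⟩
  let p : Σ i, Fin (ar i) → A.carrier := ⟨i, x⟩
  have eventually_mem : ∀ᶠ s in (F : Filter (Finset _)), p ∈ s :=
    Ultrafilter.of_le _ <| (Filter.eventually_ge_atTop {p}).mono fun s =>
      Finset.singleton_subset_iff.1
  have (s : Finset _) : ∃ b, p ∈ s → b ∈ f i (B s) (hB s) fun j => e s (x j) := by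
    by_cases h : p ∈ s
    · exact ⟨_, fun _ => Part.get_mem (he s _ h)⟩
    · exact ⟨Classical.arbitrary _, fun h' => absurd h' h⟩
  choose b hb using this
  exact (mem_uprod_of_eventually_mem (hf i).1 hB (hU _ F B hB) (eventually_mem.mono hb)).1

theorem directLimit_mem (hK : IsUniversalClass K) (G : ℕ → Alg L) (hG : ∀ n, G n ∈ K)
    [∀ n, Nonempty (G n).carrier] (g : ∀ n, (G n).carrier ↪[L] (G (n + 1)).carrier) :
    Alg.mk (L := L) (Language.DirectLimit (fun n => (G n).carrier)
      (DirectedSystem.natLERec g)) ∈ K := by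
  let F : Ultrafilter (ULift.{u} ℕ) := (Filter.hyperfilter ℕ).map ULift.up
  let of := DirectLimit.of L ℕ (fun n => (G n).carrier) (DirectedSystem.natLERec g)
  refine hK.2.1 _ (Alg.uprod F fun n => G n.down) (hK.2.2 _ F _ fun n => hG n.down)
    ⟨uprodOfCover (fun n => of n.down) fun d => ?_⟩
  obtain ⟨n, x, rfl⟩ := DirectLimit.exists_of d
  have : ∀ᶠ m in (Filter.hyperfilter ℕ : Filter ℕ), n ≤ m :=
    Nat.hyperfilter_le_atTop (Filter.eventually_ge_atTop n)
  exact this.mono fun m hnm => ⟨DirectedSystem.natLERec g n m hnm x, DirectLimit.of_f⟩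

theorem exists_total_extension (hK : IsUniversalClass K) (hf : ∀ i, IsImplicitOp (f i))
    (hext : ∀ i, Extendable (f i)) {A : Alg L} [hne : Nonempty A.carrier] (hA : A ∈ K) :
    ∃ (E : Alg L) (hE : E ∈ K) (_ : A.carrier ↪[L] E.carrier),
      ∀ i (x : Fin (ar i) → E.carrier), (f i E hE x).Dom := by
  choose S hS e he using fun A : {A : Alg L // Nonempty A.carrier ∧ A ∈ K} =>
    have := A.2.1; exists_extension_dom hK.2.2 hf hext A.2.2
  let G : ℕ → {A : Alg L // Nonempty A.carrier ∧ A ∈ K} :=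
    Nat.rec ⟨A, hne, hA⟩ fun _ B => ⟨S B, B.2.1.map (e B), hS B⟩
  have : ∀ n, Nonempty (G n).1.carrier := fun n => (G n).2.1
  let g (n : ℕ) : (G n).1.carrier ↪[L] (G (n + 1)).1.carrier := e (G n)
  let of := DirectLimit.of L ℕ (fun n => (G n).1.carrier) (DirectedSystem.natLERec g)
  have of_succ (n : ℕ) (x : (G n).1.carrier) : of (n + 1) (g n x) = of n x := by
    refine Eq.trans (congrArg (of (n + 1)) ?_) (DirectLimit.of_f (hij := n.le_succ))
    rw [DirectedSystem.coe_natLERec]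
    exact (Nat.leRecOn_succ' (C := fun n => (G n).1.carrier) (next := fun {k} => g k) x).symm
  have hD := directLimit_mem hK (fun n => (G n).1) (fun n => (G n).2.2) g
  refine ⟨_, hD, of 0, fun i x => ?_⟩
  obtain ⟨n, y, rfl⟩ := DirectLimit.exists_quotient_mk'_sigma_mk'_eq _ _ x
  have h := (hf i).2.dom_map hD (of (n + 1)).toHom (he (G n) i y)
  have hy : (fun j => of (n + 1) (g n (y j))) = fun j => of n (y j) :=
    funext fun j => of_succ n (y j)
  exact hy ▸ h

end TotalExtension

section Dominions

variable {K : Set (Alg L)}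

/-- The pair `(a, b)` as an element of the direct product `Alg.prod A B`. -/
def prodMk {A B : Alg L} (a : A.carrier) (b : B.carrier) : (Alg.prod A B).carrier :=
  (a, b)

theorem realize_prod {A B : Alg L} {α : Type*} (t : L.Term α) (x : α → (Alg.prod A B).carrier) :
    t.realize x = prodMk (t.realize fun a => (x a).1) (t.realize fun a => (x a).2) := by
  induction t with
  | var => rfl
  | func g ts ih =>
    simp only [Term.realize_func, ih]
    rfl

theorem IsConjEq.realize_prod {A B : Alg L} {α : Type*} {k : ℕ} {φ : L.BoundedFormula α k}
    (hφ : IsConjEq φ) {v : α → (Alg.prod A B).carrier} {xs : Fin k → (Alg.prod A B).carrier}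
    (hA : φ.Realize (fun a => (v a).1) fun i => (xs i).1)
    (hB : φ.Realize (fun a => (v a).2) fun i => (xs i).2) : φ.Realize v xs := by
  induction hφ with
  | top => trivial
  | equal t₁ t₂ =>
    have elim_fst :
        (fun a => (Sum.elim v xs a).1) = Sum.elim (fun a => (v a).1) fun i => (xs i).1 :=
      Sum.comp_elim Prod.fst v xs
    have elim_snd :
        (fun a => (Sum.elim v xs a).2) = Sum.elim (fun a => (v a).2) fun i => (xs i).2 :=
      Sum.comp_elim Prod.snd v xs
    change t₁.realize _ = t₂.realize _
    rw [Impl.realize_prod, Impl.realize_prod, elim_fst, elim_snd]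
    exact Prod.ext hA hB
  | inf _ _ ih₁ ih₂ =>
    rw [BoundedFormula.realize_inf] at hA hB ⊢
    exact ⟨ih₁ hA.1 hB.1, ih₂ hA.2 hB.2⟩

theorem IsPP.realize_prod {A B : Alg L} {α : Type*} {k : ℕ} {φ : L.BoundedFormula α k}
    (hφ : IsPP φ) {v : α → (Alg.prod A B).carrier} {xs : Fin k → (Alg.prod A B).carrier}
    (hA : φ.Realize (fun a => (v a).1) fun i => (xs i).1)
    (hB : φ.Realize (fun a => (v a).2) fun i => (xs i).2) : φ.Realize v xs := by
  induction hφ with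
  | of_conjEq h => exact h.realize_prod hA hB
  | ex _ ih =>
    rw [BoundedFormula.realize_ex] at hA hB ⊢
    obtain ⟨a, ha⟩ := hA
    obtain ⟨b, hb⟩ := hB
    let c : (Alg.prod A B).carrier := prodMk a b
    refine ⟨c, ih ?_ ?_⟩
    · exact (congrArg _ (Fin.comp_snoc Prod.fst xs c)).mpr ha
    · exact (congrArg _ (Fin.comp_snoc Prod.snd xs c)).mpr hb

theorem InExtPP.mem_prod {n : ℕ} {g : PartialFunOn K n} (hg : InExtPP g) {A B : Alg L}
    {hA : A ∈ K} {hB : B ∈ K} (hAB : Alg.prod A B ∈ K) {x : Fin n → A.carrier}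
    {y : Fin n → B.carrier} {a : A.carrier} {b : B.carrier} (ha : a ∈ g A hA x)
    (hb : b ∈ g B hB y) :
    prodMk a b ∈ g (Alg.prod A B) hAB fun j => prodMk (x j) (y j) := by
  obtain ⟨-, ⟨φ, hφ, hdef⟩, -⟩ := hg
  rw [hdef] at ha hb ⊢
  let xy : Fin n → (Alg.prod A B).carrier := fun j => prodMk (x j) (y j)
  let ab : (Alg.prod A B).carrier := prodMk a b
  refine hφ.realize_prod (v := Fin.snoc xy ab) ?_ ?_
  · have snoc_fst : Prod.fst ∘ (Fin.snoc xy ab : Fin (n + 1) → (Alg.prod A B).carrier) =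
        Fin.snoc x a := Fin.comp_snoc Prod.fst xy ab
    exact (congrArg₂ _ snoc_fst (Subsingleton.elim _ _)).mpr ha
  · have snoc_snd : Prod.snd ∘ (Fin.snoc xy ab : Fin (n + 1) → (Alg.prod A B).carrier) =
        Fin.snoc y b := Fin.comp_snoc Prod.snd xy ab
    exact (congrArg₂ _ snoc_snd (Subsingleton.elim _ _)).mpr hb

theorem map_mem_dominion {M N : Type u} [L.Structure M] [L.Structure N] (φ : M →[L] N)
    {s : Set M} {b : M} (hb : b ∈ dominion K M s) : φ b ∈ dominion K N (φ '' s) :=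
  fun C hC g h hgh => hb C hC (g.comp φ) (h.comp φ) fun a ha => hgh _ ⟨a, ha, rfl⟩

variable {ι : Type u} {ar : ι → ℕ} {f : ∀ i, PartialFunOn K (ar i)}

theorem realize_mem_dominion_prod (hK : IsQuasivariety K) (hf : ∀ i, InExtPP (f i))
    {B : Alg (L.sum (newLang ar))} (hB : B ∈ expClass K ar f) {α : Type*}
    (t : (L.sum (newLang ar)).Term α) (x y : α → B.carrier) :
    prodMk (A := algReduct B) (B := algReduct B)
        (t.realize (M := B.carrier) x) (t.realize (M := B.carrier) y) ∈
      dominion K (Alg.prod (algReduct B) (algReduct B)).carrier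
        (Set.range fun j => prodMk (x j) (y j)) := by
  obtain ⟨hBK, hBf⟩ := hB
  have hBB := hK.prod_mem hBK hBK
  intro C hC g h hgh
  induction t with
  | var j => exact hgh _ ⟨j, rfl⟩
  | @func n s ts ih =>
    let pairs : Fin n → (Alg.prod (algReduct B) (algReduct B)).carrier :=
      fun j => prodMk ((ts j).realize (M := B.carrier) x) ((ts j).realize (M := B.carrier) y)
    have hpairs : (fun j => g (pairs j)) = fun j => h (pairs j) := funext ih
    rcases s with s | ⟨i, rfl⟩
    · exact (g.map_fun s pairs).trans ((congrArg (Structure.funMap s) hpairs).trans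
        (h.map_fun s pairs).symm)
    · -- Being pp definable, `f i` acts coordinatewise on products, so `g` and `h` preserve it.
      have mem := (hf i).mem_prod hBB (hBf i fun j => (ts j).realize x)
        (hBf i fun j => (ts j).realize y)
      have hg := (hf i).1 _ C hBB hC g pairs _ mem
      have hh := (hf i).1 _ C hBB hC h pairs _ mem
      exact Part.mem_unique (hpairs ▸ hg) hh

/-- The expansion of an algebra on which every `f i` is total to the language with a symbol for
each `f i`. -/
def expand (ar : ι → ℕ) (f : ∀ i, PartialFunOn K (ar i)) {E : Alg L} (hE : E ∈ K)
    (total : ∀ i (x : Fin (ar i) → E.carrier), (f i E hE x).Dom) : Alg (L.sum (newLang ar)) where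
  carrier := E.carrier
  str :=
    { funMap := fun s x => match s with
        | .inl s => Structure.funMap s x
        | .inr ⟨i, hi⟩ => (f i E hE (x ∘ Fin.cast hi)).get (total i _)
      RelMap := fun r x => match r with
        | .inl r => Structure.RelMap r x }

theorem expand_mem_expClass {E : Alg L} (hE : E ∈ K)
    (total : ∀ i (x : Fin (ar i) → E.carrier), (f i E hE x).Dom) :
    expand ar f hE total ∈ expClass K ar f :=
  ⟨hE, fun i x => Part.get_mem (total i x)⟩

theorem IsBethCompanionVia.exists_mem_dominion_prod (hK : IsQuasivariety K)
    {M : Set (Alg (L.sum (newLang ar)))} (hM : IsBethCompanionVia K ar f M) {n : ℕ} (hn : 0 < n)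
    {g : PartialFunOn K n} (hg : IsImplicitOp g) {A : Alg L} [Nonempty A.carrier] (hA : A ∈ K) :
    ∃ E ∈ K, ∃ e : A.carrier ↪[L] E.carrier, ∀ (x y : Fin n → A.carrier), ∀ b ∈ g A hA x,
      ∃ c : E.carrier, prodMk c (e b) ∈
        dominion K (Alg.prod E E).carrier (Set.range fun j => prodMk (e (y j)) (e (x j))) := by
  obtain ⟨⟨-, hf, rfl⟩, hterms⟩ := hM
  obtain ⟨E, hE, e, total⟩ := exists_total_extension hK.isUniversalClass
    (fun i => (hf i).isImplicitOp) (fun i => (hf i).2.2) hA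
  have hB := expand_mem_expClass hE total
  obtain ⟨T, hT⟩ := hterms n hn g hg
  refine ⟨E, hE, e, fun x y b hb => ?_⟩
  obtain ⟨t, -, ht⟩ := hT _ ⟨_, hB, ⟨Embedding.refl _ _⟩⟩ hE (fun j => e (x j)) (e b)
    (hg.2 A E hA hE e.toHom x b hb)
  exact ⟨t.realize (M := (expand ar f hE total).carrier) fun j => e (y j),
    ht ▸ realize_mem_dominion_prod hK hf hB t (fun j => e (y j)) fun j => e (x j)⟩

end Dominions

section DefinablePartialFunctions

/-- The partial function on `K` whose graph is the solution set of `φ`, the last variable being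
the output; an arbitrary solution is chosen when `φ` is not functional. -/
noncomputable def partialFunOfFormula (K : Set (Alg L)) {n : ℕ} (φ : L.Formula (Fin (n + 1))) :
    PartialFunOn K n :=
  fun A _ x => ⟨∃ b : A.carrier, φ.Realize (Fin.snoc x b), Exists.choose⟩

theorem FunctionalIn.definedBy_partialFunOfFormula {K : Set (Alg L)} {n : ℕ}
    {φ : L.Formula (Fin (n + 1))} (hφ : FunctionalIn K φ) :
    DefinedBy (partialFunOfFormula K φ) φ := fun A hA x b =>
  ⟨fun ⟨h, hb⟩ => hb ▸ h.choose_spec,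
    fun hb =>
      have h : ∃ c, φ.Realize (Fin.snoc x c) := ⟨b, hb⟩
      ⟨h, hφ A hA x _ _ h.choose_spec hb⟩⟩

theorem FunctionalIn.isImplicitOp_partialFunOfFormula {K : Set (Alg L)} {n : ℕ}
    {φ : L.Formula (Fin (n + 1))} (hφ : FunctionalIn K φ) (hhom : PreservedByHomsOn K φ) :
    IsImplicitOp (partialFunOfFormula K φ) := by
  refine ⟨⟨φ, hφ.definedBy_partialFunOfFormula⟩, fun A B hA hB h x b hb => ?_⟩
  rw [hφ.definedBy_partialFunOfFormula] at hb ⊢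
  exact (congrArg φ.Realize (Fin.comp_snoc h x b)).mp (hhom A B hA hB h _ hb)

end DefinablePartialFunctions

section Monoids

/-- A monoid regarded as a structure for the language of monoids. -/
instance monoidStructure {M : Type} [Monoid M] : Lmon.Structure M where
  funMap {k} := match k with
    | 0 => fun _ _ => 1
    | 1 => fun s _ => PEmpty.elim s
    | 2 => fun _ x => x 0 * x 1
    | _ + 3 => fun s _ => PEmpty.elim s
  RelMap r _ := PEmpty.elim r

/-- A monoid regarded as an algebra in the language of monoids. -/
abbrev algOf (M : Type) [Monoid M] : Alg Lmon := ⟨M⟩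

theorem algOf_mem_monCl (M : Type) [Monoid M] : algOf M ∈ MonCl :=
  ⟨mul_assoc (G := M), mul_one (M := M), one_mul (M := M)⟩

theorem algOf_mem_commMonCl (M : Type) [CommMonoid M] : algOf M ∈ CommMonCl :=
  ⟨algOf_mem_monCl M, mul_comm (G := M)⟩

theorem exists_eq_algOf {A : Alg Lmon} (hA : A ∈ MonCl) :
    ∃ (M : Type) (_ : Monoid M), A = algOf M := by
  obtain ⟨M, str⟩ := A
  let monoid : Monoid M :=
    { mul := mmul, one := mone, mul_assoc := hA.1, mul_one := hA.2.1, one_mul := hA.2.2 }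
  refine ⟨M, monoid, congrArg (@Alg.mk Lmon M) (Structure.ext ?_ ?_)⟩
  · funext k s x
    match k, s with
    | 0, _ => exact congrArg (Structure.funMap oneSym) (Subsingleton.elim x ![])
    | 2, _ => exact congrArg (Structure.funMap mulSym) (funext <| Fin.forall_fin_two.2 ⟨rfl, rfl⟩)
  · funext _ r
    exact PEmpty.elim r

section Homomorphisms

variable {M N : Type} [Lmon.Structure M] [Lmon.Structure N]

theorem map_mmul {F : Type*} [FunLike F M N] [Lmon.HomClass F M N] (h : F) (a b : M) :
    h (mmul a b) = mmul (h a) (h b) :=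
  (HomClass.map_fun h mulSym ![a, b]).trans
    (congrArg _ (funext <| Fin.forall_fin_two.2 ⟨rfl, rfl⟩))

theorem map_mone {F : Type*} [FunLike F M N] [Lmon.HomClass F M N] (h : F) :
    h (mone : M) = mone :=
  (HomClass.map_fun h oneSym ![]).trans (congrArg _ (Subsingleton.elim _ _))

/-- A map preserving the unit and the multiplication, as a homomorphism of structures. -/
def homOfMap (h : M → N) (map_one : h mone = mone)
    (map_mul : ∀ a b, h (mmul a b) = mmul (h a) (h b)) : M →[Lmon] N where
  toFun := h
  map_fun' {k} s x := match k, s with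
    | 0, _ => by
      have hx : x = ![] := Subsingleton.elim _ _
      have hhx : h ∘ x = ![] := Subsingleton.elim _ _
      rw [hhx, hx]
      exact map_one
    | 2, _ => by
      have hx : x = ![x 0, x 1] := funext <| Fin.forall_fin_two.2 ⟨rfl, rfl⟩
      have hhx : h ∘ x = ![h (x 0), h (x 1)] := funext <| Fin.forall_fin_two.2 ⟨rfl, rfl⟩
      rw [hhx, hx]
      exact map_mul (x 0) (x 1)
  map_rel' r _ := PEmpty.elim r

end Homomorphisms

/-- A monoid homomorphism, as a homomorphism of structures. -/
def homOfMonoidHom {M N : Type} [Monoid M] [Monoid N] (h : M →* N) : M →[Lmon] N :=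
  homOfMap h h.map_one h.map_mul

/-- A homomorphism of structures between monoids, as a monoid homomorphism. -/
def toMonoidHom {M N : Type} [Monoid M] [Monoid N] (h : M →[Lmon] N) : M →* N where
  toFun := h
  map_one' := map_mone h
  map_mul' := map_mmul h

/-- The `i`-th projection of a direct product. -/
def piEval {ι : Type u} (A : ι → Alg L) (i : ι) : (Alg.pi A).carrier →[L] (A i).carrier where
  toFun x := x i
  map_rel' _ _ h := h i

theorem pi_ext {ι : Type u} {A : ι → Alg L} {x y : (Alg.pi A).carrier}
    (h : ∀ i, piEval A i x = piEval A i y) : x = y :=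
  funext h

theorem monCl_isVariety : IsVariety MonCl := by
  refine ⟨fun A B ⟨assoc, mul_one, one_mul⟩ h surj => ?_,
    fun A B ⟨assoc, mul_one, one_mul⟩ ⟨e⟩ => ?_, fun ι A hA => ?_⟩
  · refine ⟨surj.forall₃.2 fun a b c => ?_, surj.forall.2 fun a => ?_, surj.forall.2 fun a => ?_⟩
    · simp only [← map_mmul, assoc]
    · simp only [← map_mone h, ← map_mmul, mul_one]
    · simp only [← map_mone h, ← map_mmul, one_mul]
  · refine ⟨fun a b c => ?_, fun a => ?_, fun a => ?_⟩ <;> apply e.injective <;>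
      simp only [map_mmul, map_mone, assoc, mul_one, one_mul]
  · refine ⟨fun a b c => pi_ext fun i => ?_, fun a => pi_ext fun i => ?_,
      fun a => pi_ext fun i => ?_⟩ <;>
      simp only [map_mmul, map_mone, (hA i).1, (hA i).2.1, (hA i).2.2]

theorem commMonCl_isVariety : IsVariety CommMonCl := by
  refine ⟨fun A B ⟨hA, comm⟩ h surj => ⟨monCl_isVariety.1 A B hA h surj, ?_⟩,
    fun A B ⟨hB, comm⟩ ⟨e⟩ => ⟨monCl_isVariety.2.1 A B hB ⟨e⟩, fun a b => e.injective ?_⟩,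
    fun ι A hA => ⟨monCl_isVariety.2.2 ι A fun i => (hA i).1, fun a b => pi_ext fun i => ?_⟩⟩
  · exact surj.forall₂.2 fun a b => by simp only [← map_mmul, comm]
  · simp only [map_mmul, comm]
  · simp only [map_mmul, (hA i).2]

end Monoids

section DominionOfPowers

/-- The elements of a monoid that are quotients of powers of `z`. -/
def powRatios {M : Type*} [Monoid M] (z : M) : Set M :=
  {b | ∃ p q : ℕ, b * z ^ p = z ^ q}

theorem one_mem_powRatios {M : Type*} [Monoid M] (z : M) : 1 ∈ powRatios z :=
  ⟨0, 0, one_mul _⟩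

theorem mul_mem_powRatios_iff {M : Type*} [Monoid M] {z a : M} :
    a * z ∈ powRatios z ↔ a ∈ powRatios z := by
  constructor
  · rintro ⟨p, q, h⟩
    exact ⟨p + 1, q, by rw [pow_succ', ← mul_assoc, h]⟩
  · rintro ⟨p, q, h⟩
    exact ⟨p, q + 1, by rw [mul_assoc, ← pow_succ', pow_succ, ← mul_assoc, h, pow_succ]⟩

theorem smul_eq_of_mem_dominion {M V : Type} [Monoid M] [AddCommGroup V] [DistribMulAction M V]
    {s : Set M} {b : M} (hb : b ∈ dominion MonCl M s) {v : V} (hv : ∀ a ∈ s, a • v = v) :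
    b • v = v := by
  -- Conjugating the action by translation by `v` leaves it unchanged exactly on the stabilizer
  -- of `v`.
  let linear : M →* Function.End V := MulAction.toEndHom
  let affine : M →* Function.End V :=
    { toFun := fun a w => a • (w - v) + v
      map_one' := funext fun w => show (1 : M) • (w - v) + v = w by
        rw [one_smul, sub_add_cancel]
      map_mul' := fun a a' => funext fun w =>
        show (a * a') • (w - v) + v = a • (a' • (w - v) + v - v) + v by
          rw [mul_smul, add_sub_cancel_right] }
  have agree : ∀ a ∈ s, linear a = affine a := fun a ha =>
    funext fun w => show a • w = a • (w - v) + v by rw [smul_sub, hv a ha, sub_add_cancel]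
  have h : b • v = b • (v - v) + v := congrFun
    (hb (algOf (Function.End V)) (algOf_mem_monCl _) (homOfMonoidHom linear)
      (homOfMonoidHom affine) agree) v
  rwa [sub_self, smul_zero, zero_add] at h

/-- The action of a monoid on its integer valued functions by right translation of the
argument. -/
abbrev rightTranslation (M : Type*) [Monoid M] : DistribMulAction M (M → ℤ) where
  smul a f := fun s => f (s * a)
  one_smul f := funext fun s => congrArg f (mul_one s)
  mul_smul a b f := funext fun s => congrArg f (mul_assoc s a b).symm
  smul_zero _ := rfl
  smul_add _ _ _ := rfl

theorem dominion_monCl_singleton_subset_powRatios {M : Type} [Monoid M] (z : M) :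
    dominion MonCl M {z} ⊆ powRatios z := by
  intro b hb
  let _ := rightTranslation M
  let v : M → ℤ := (powRatios z).indicator 1
  have hv : z • v = v := funext fun s =>
    Set.indicator_eq_indicator (g := 1) mul_mem_powRatios_iff rfl
  have apply_one : v (1 * b) = v 1 :=
    congrFun (smul_eq_of_mem_dominion hb (v := v) (by rintro _ rfl; exact hv)) 1
  rw [one_mul] at apply_one
  have v_one : v 1 = 1 := Set.indicator_of_mem (one_mem_powRatios z) 1
  exact Set.mem_of_indicator_ne_zero ((apply_one.trans v_one).trans_ne one_ne_zero)

/-- The congruence of a commutative monoid identifying elements that agree up to powers of `z`. -/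
def powCon {M : Type*} [CommMonoid M] (z : M) : Con M where
  r a b := ∃ p q : ℕ, a * z ^ p = b * z ^ q
  iseqv :=
    { refl := fun a => ⟨0, 0, rfl⟩
      symm := fun ⟨p, q, h⟩ => ⟨q, p, h.symm⟩
      trans := by
        rintro a b c ⟨p, q, h⟩ ⟨p', q', h'⟩
        refine ⟨p + p', q' + q, ?_⟩
        rw [pow_add, ← mul_assoc, h, mul_right_comm, h', mul_assoc, pow_add] }
  mul' := by
    rintro a b c d ⟨p, q, h⟩ ⟨p', q', h'⟩
    refine ⟨p + p', q + q', ?_⟩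
    rw [pow_add, mul_mul_mul_comm, h, h', pow_add, mul_mul_mul_comm]

theorem dominion_commMonCl_singleton_subset_powRatios {M : Type} [CommMonoid M] (z : M) :
    dominion CommMonCl M {z} ⊆ powRatios z := by
  intro b hb
  have mk_z : (powCon z).mk' z = 1 := (Con.eq _).2 ⟨0, 1, by simp⟩
  have mk_b : (powCon z).mk' b = 1 :=
    hb (algOf (powCon z).Quotient) (algOf_mem_commMonCl _) (homOfMonoidHom (powCon z).mk')
      (homOfMonoidHom 1) (by rintro _ rfl; exact mk_z)
  obtain ⟨p, q, h⟩ := (Con.eq _).1 mk_b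
  exact ⟨p, q, by rw [h, one_mul]⟩

end DominionOfPowers

section Inverses

/-- The formula `x * y = 1 ∧ y * x = 1`, defining the inverse `y` of `x`. -/
def invFormula : Lmon.Formula (Fin 2) :=
  (mulSym.apply₂ (.var 0) (.var 1)).equal (Constants.term oneSym) ⊓
    (mulSym.apply₂ (.var 1) (.var 0)).equal (Constants.term oneSym)

theorem realize_invFormula {M : Type} [Monoid M] {x : Fin 2 → M} :
    invFormula.Realize x ↔ x 0 * x 1 = 1 ∧ x 1 * x 0 = 1 :=
  Formula.realize_inf.trans <| and_congr Formula.realize_equal Formula.realize_equal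

variable {K : Set (Alg Lmon)}

theorem functionalIn_invFormula (hK : K ⊆ MonCl) : FunctionalIn K invFormula := by
  intro A hA x b c hb hc
  obtain ⟨M, _, rfl⟩ := exists_eq_algOf (hK hA)
  rw [realize_invFormula] at hb hc
  exact left_inv_eq_right_inv hb.2 hc.1

theorem preservedByHomsOn_invFormula (hK : K ⊆ MonCl) : PreservedByHomsOn K invFormula := by
  intro A B hA hB h x hx
  obtain ⟨M, _, rfl⟩ := exists_eq_algOf (hK hA)
  obtain ⟨N, _, rfl⟩ := exists_eq_algOf (hK hB)
  rw [realize_invFormula] at hx ⊢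
  have map_eq_one {a b : M} (hab : a * b = 1) : toMonoidHom h a * toMonoidHom h b = 1 := by
    rw [← map_mul, hab, map_one]
  exact hx.imp map_eq_one map_eq_one

/-- The partial operation of taking inverses, on a class of monoids. -/
noncomputable def inverseOp (K : Set (Alg Lmon)) : PartialFunOn K 1 :=
  partialFunOfFormula K invFormula

theorem isImplicitOp_inverseOp (hK : K ⊆ MonCl) : IsImplicitOp (inverseOp K) :=
  (functionalIn_invFormula hK).isImplicitOp_partialFunOfFormula (preservedByHomsOn_invFormula hK)

theorem inv_mem_inverseOp (hK : K ⊆ MonCl) {M : Type} [Monoid M] (hM : algOf M ∈ K) (u : Mˣ) :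
    (↑u⁻¹ : M) ∈ inverseOp K (algOf M) hM fun _ => (u : M) := by
  refine ((functionalIn_invFormula hK).definedBy_partialFunOfFormula _ hM _ _).2 ?_
  exact realize_invFormula.2 ⟨u.mul_inv, u.inv_mul⟩

end Inverses

section Obstruction

/-- Right multiplication by `z` stabilizes at every height: for every `q` some `z ^ (q + 1) * c`
is fixed by it while `z ^ q * c` is not. This rules out solutions of `y * z ^ (q + 1) = z ^ q` in
all extensions. -/
def StabilizesAtEveryHeight {M : Type*} [Monoid M] (z : M) : Prop :=
  ∀ q : ℕ, ∃ c, z ^ (q + 1) * c * z = z ^ (q + 1) * c ∧ z ^ q * c * z ≠ z ^ q * c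

theorem StabilizesAtEveryHeight.mul_map_pow_succ_ne {M N : Type*} [Monoid M] [Monoid N] {z : M}
    (hz : StabilizesAtEveryHeight z) {e : M →* N} (he : Function.Injective e) (q : ℕ) (y : N) :
    y * e z ^ (q + 1) ≠ e z ^ q := by
  intro hy
  obtain ⟨c, fixed, moved⟩ := hz q
  have mul_eq : y * e (z ^ (q + 1) * c) = e (z ^ q * c) := by
    rw [map_mul, map_mul, map_pow, map_pow, ← mul_assoc, hy]
  refine moved (he ?_)
  calc e (z ^ q * c * z) = y * e (z ^ (q + 1) * c * z) := by
        rw [map_mul, ← mul_eq, mul_assoc, ← map_mul]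
    _ = e (z ^ q * c) := by rw [fixed, mul_eq]

theorem stabilizesAtEveryHeight_two :
    StabilizesAtEveryHeight (2 : ∀ N : ℕ, ZMod (2 ^ N)) := by
  intro q
  have two_pow_eq_zero : (2 : ZMod (2 ^ (q + 1))) ^ (q + 1) = 0 := by
    exact_mod_cast ZMod.natCast_self (2 ^ (q + 1))
  have two_pow_ne_zero : (2 : ZMod (2 ^ (q + 1))) ^ q ≠ 0 := by
    have : ¬ 2 ^ (q + 1) ∣ 2 ^ q := (Nat.pow_dvd_pow_iff_le_right one_lt_two).not.2 (by simp)
    exact_mod_cast (ZMod.natCast_eq_zero_iff (2 ^ q) _).not.2 this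
  refine ⟨Pi.single (q + 1) 1, ?_, fun h => two_pow_ne_zero ?_⟩
  · rw [← Pi.single_mul_right]
    simp [two_pow_eq_zero]
  · have h_eval : (2 : ZMod (2 ^ (q + 1))) ^ q * 2 = 2 ^ q := by simpa using congrFun h (q + 1)
    rw [← h_eval, ← pow_succ, two_pow_eq_zero]

theorem StabilizesAtEveryHeight.one_prod {M N : Type*} [Monoid M] [Monoid N] {z : N}
    (hz : StabilizesAtEveryHeight z) : StabilizesAtEveryHeight ((1, z) : M × N) := fun q => by
  obtain ⟨c, fixed, moved⟩ := hz q
  exact ⟨(1, c), by simp [fixed], by simp [moved]⟩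

/-- The identity map from a product of algebras to the corresponding product of monoids. -/
def prodEquiv (M N : Type) [Monoid M] [Monoid N] :
    (Alg.prod (algOf M) (algOf N)).carrier ≃[Lmon] M × N where
  toEquiv := Equiv.refl (M × N)
  map_fun' :=
    let hom : (Alg.prod (algOf M) (algOf N)).carrier →[Lmon] M × N :=
      homOfMap id rfl fun _ _ => rfl
    hom.map_fun'
  map_rel' r _ := PEmpty.elim r

theorem eq_succ_of_inv_mul_pow_eq_pow {G : Type*} [Group G] {u : G}
    (hu : Function.Injective (u ^ · : ℕ → G)) {p q : ℕ} (h : u⁻¹ * u ^ p = u ^ q) : p = q + 1 :=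
  hu (by simpa only [pow_succ'] using inv_mul_eq_iff_eq_mul.1 h)

theorem not_exists_isBethCompanionVia {K : Set (Alg Lmon)} (hK : IsQuasivariety K)
    (hmon : K ⊆ MonCl)
    (hdom : ∀ (M : Type) [Monoid M], algOf M ∈ K → ∀ z : M, dominion K M {z} ⊆ powRatios z)
    {R : Type} [Monoid R] (hR : algOf R ∈ K) (u : Rˣ) (hu : Function.Injective (u ^ · : ℕ → Rˣ))
    {z : R} (hz : StabilizesAtEveryHeight z) :
    ¬ ∃ (ι : Type) (ar : ι → ℕ) (f : ∀ i, PartialFunOn K (ar i))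
        (M : Set (Alg (Lmon.sum (newLang ar)))), IsBethCompanionVia K ar f M := by
  rintro ⟨ι, ar, f, M, hM⟩
  obtain ⟨E, hE, e, he⟩ :=
    hM.exists_mem_dominion_prod hK one_pos (isImplicitOp_inverseOp hmon) hR
  obtain ⟨E, _, rfl⟩ := exists_eq_algOf (hmon hE)
  obtain ⟨c, hc⟩ := he (fun _ => (u : R)) (fun _ => z) _ (inv_mem_inverseOp hmon hR u)
  let e' : R →* E := toMonoidHom e.toHom
  have hEE : algOf (E × E) ∈ K := hK.1 _ _ (hK.prod_mem hE hE) ⟨prodEquiv E E⟩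
  have mem : (c, e' ↑u⁻¹) ∈ dominion K (E × E) {(e' z, e' u)} := by
    have := map_mem_dominion (prodEquiv E E).toHom hc
    rwa [Set.range_const, Set.image_singleton] at this
  obtain ⟨p, q, hpq⟩ := hdom (E × E) hEE _ mem
  have ratio_z : c * e' z ^ p = e' z ^ q := congrArg Prod.fst hpq
  have ratio_u : e' ↑u⁻¹ * e' u ^ p = e' u ^ q := congrArg Prod.snd hpq
  have hp : p = q + 1 := by
    refine eq_succ_of_inv_mul_pow_eq_pow hu (Units.ext (e.injective ?_))
    change e' (↑(u⁻¹ * u ^ p)) = e' ↑(u ^ q)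
    simpa using ratio_u
  exact hz.mul_map_pow_succ_ne (e := e') e.injective q c (hp ▸ ratio_z)

end Obstruction

theorem exists_units_injective_pow (N : Type*) [Monoid N] :
    ∃ u : (Multiplicative ℤ × N)ˣ, Function.Injective (u ^ · : ℕ → (Multiplicative ℤ × N)ˣ) := by
  refine ⟨MulEquiv.prodUnits.symm (toUnits (Multiplicative.ofAdd 1), 1), fun p q hpq => ?_⟩
  have h : Multiplicative.ofAdd (1 : ℤ) ^ p = Multiplicative.ofAdd 1 ^ q :=
    congrArg (fun v : (Multiplicative ℤ × N)ˣ => v.val.1) hpq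
  simpa [← ofAdd_nsmul] using h

/-- The variety of monoids and the variety of commutative monoids lack a
Beth companion. -/
theorem statement_17 :
    (¬ ∃ (ι : Type) (ar : ι → ℕ) (f : ∀ i, PartialFunOn MonCl (ar i))
        (M : Set (Alg (Lmon.sum (newLang ar)))), IsBethCompanionVia MonCl ar f M) ∧
    (¬ ∃ (ι : Type) (ar : ι → ℕ) (f : ∀ i, PartialFunOn CommMonCl (ar i))
        (M : Set (Alg (Lmon.sum (newLang ar)))), IsBethCompanionVia CommMonCl ar f M) := by
  let R := Multiplicative ℤ × ∀ N : ℕ, ZMod (2 ^ N)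
  obtain ⟨u, hu⟩ : ∃ u : Rˣ, Function.Injective (u ^ · : ℕ → Rˣ) := exists_units_injective_pow _
  have hz := stabilizesAtEveryHeight_two.one_prod (M := Multiplicative ℤ)
  constructor
  · exact not_exists_isBethCompanionVia monCl_isVariety.isQuasivariety subset_rfl
      (fun M _ _ => dominion_monCl_singleton_subset_powRatios) (algOf_mem_monCl R) u hu hz
  · exact not_exists_isBethCompanionVia commMonCl_isVariety.isQuasivariety (fun _ => And.left)
      (fun M inst hM =>
        let _ : CommMonoid M := { inst with mul_comm := hM.2 }
        dominion_commMonCl_singleton_subset_powRatios) (algOf_mem_commMonCl R) u hu hz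

end Impl
end
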